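/- Let X₁, X₂ be locally compact Polish metric spaces, C : X₁ × 𝒫(X₂) → (−∞,+∞] lower semi-continuous, bounded from below, with C(x₁,·) convex for every x₁, and let F₁, F₂ be superlinear admissible entropy functions such that F₂ has property (BM) on X₂. Then for every μ₁ ∈ ℳ(X₁), μ₂ ∈ ℳ(X₂): ℰ_C(μ₁,μ₂) = sup_{(φ₁,φ₂)∈Λ_R} Σ_{i=1}^2 ∫_{X_i} φ_i dμ_i. -/

import Mathlib

open MeasureTheory Filter Set Topology
open scoped ENNReal NNReal BoundedContinuousFunction

noncomputable section

/-- The "positive part" of an extended real number, as an element of `ℝ≥0∞`. -/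
def posE (a : EReal) : ℝ≥0∞ := if a = ⊤ then ⊤ else ENNReal.ofReal a.toReal

/-- Integral of an `EReal`-valued function: positive part minus negative part
(in `EReal`, so that it is always defined). -/
def eIntegral {α : Type*} [MeasurableSpace α] (μ : Measure α) (f : α → EReal) : EReal :=
  ((∫⁻ x, posE (f x) ∂μ : ℝ≥0∞) : EReal) - ((∫⁻ x, posE (-(f x)) ∂μ : ℝ≥0∞) : EReal)

/-- The recession constant `lim_{s→∞} G(s)/s` (as a `limsup`, which coincides with the
limit for convex functions). -/
def recessionOf (G : ℝ → ℝ≥0∞) : ℝ≥0∞ :=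
  Filter.limsup (fun s : ℝ => G s / ENNReal.ofReal s) Filter.atTop

/-- An admissible entropy function: a convex, lower semicontinuous function
`F : [0,∞) → [0,∞]` which is finite at some positive point. -/
structure EntropyFn where
  F : ℝ → ℝ≥0∞
  convex' : ∀ a ∈ Ici (0:ℝ), ∀ b ∈ Ici (0:ℝ), ∀ t : ℝ, 0 ≤ t → t ≤ 1 →
    F (t * a + (1 - t) * b) ≤ ENNReal.ofReal t * F a + ENNReal.ofReal (1 - t) * F b
  lsc : LowerSemicontinuousOn F (Ici (0:ℝ))
  dom : ∃ s : ℝ, 0 < s ∧ F s ≠ ∞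

namespace EntropyFn

/-- The recession constant `F'_∞ = lim_{s→∞} F(s)/s`. -/
def recC (F : EntropyFn) : ℝ≥0∞ := recessionOf F.F

/-- `F` is superlinear if `F'_∞ = ∞`. -/
def Superlinear (F : EntropyFn) : Prop := F.recC = ∞

/-- `F°(φ) := inf_{s ≥ 0} (φ·s + F(s))`, extended to `EReal` arguments. -/
def circ (F : EntropyFn) (φ : EReal) : EReal :=
  ⨅ s : Ici (0:ℝ), φ * ((s : ℝ) : EReal) + ((F.F (s : ℝ) : ℝ≥0∞) : EReal)

/-- The (interior of the) domain of `F°` is taken inside the set where `F°` is not `-∞`. -/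
def circDom (F : EntropyFn) : Set ℝ := {φ : ℝ | F.circ (φ : EReal) ≠ ⊥}

/-- The reverse entropy function `R(r) = r·F(1/r)` for `r > 0`, with `R(0) = F'_∞`. -/
def revF (F : EntropyFn) (r : ℝ) : ℝ≥0∞ :=
  if 0 < r then ENNReal.ofReal r * F.F (1 / r) else F.recC

/-- The Legendre conjugate `R*(ψ) = sup_{s ≥ 0} (s·ψ − R(s))` of the reverse function. -/
def revConj (F : EntropyFn) (ψ : ℝ) : EReal :=
  ⨆ s : Ici (0:ℝ), (((s : ℝ) * ψ : ℝ) : EReal) - ((F.revF (s : ℝ) : ℝ≥0∞) : EReal)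

end EntropyFn

/-- The entropy functional `ℱ(γ|μ) = ∫ F(dγ/dμ) dμ + F'_∞ · γ^⊥(X)`, where
`γ = (dγ/dμ)·μ + γ^⊥` is the Lebesgue decomposition of `γ` with respect to `μ`. -/
def entF {X : Type*} [MeasurableSpace X] (F : EntropyFn) (γ μ : Measure X) : ℝ≥0∞ :=
  (∫⁻ x, F.F ((γ.rnDeriv μ x).toReal) ∂μ) + F.recC * (γ.singularPart μ) Set.univ

/-- The reverse entropy functional `ℛ(μ|γ) = ∫ R(dμ/dγ) dγ + R'_∞ · μ^⊥(X)`. -/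
def revEntF {X : Type*} [MeasurableSpace X] (F : EntropyFn) (μ γ : Measure X) : ℝ≥0∞ :=
  (∫⁻ x, F.revF ((μ.rnDeriv γ x).toReal) ∂γ) + recessionOf F.revF * (μ.singularPart γ) Set.univ

section WOET

variable {X₁ X₂ : Type*} [MeasurableSpace X₁] [MeasurableSpace X₂]

/-- The weak entropy-transport cost
`ℰ_C(γ|μ₁,μ₂) = ℱ₁(γ₁|μ₁) + ℱ₂(γ₂|μ₂) + ∫ C(x₁, γ_{x₁}) dγ₁(x₁)`. -/
def wCost [StandardBorelSpace X₂] [Nonempty X₂]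
    (C : X₁ → ProbabilityMeasure X₂ → EReal) (F₁ F₂ : EntropyFn)
    (μ₁ : Measure X₁) (μ₂ : Measure X₂)
    (γ : Measure (X₁ × X₂)) (hγ : IsFiniteMeasure γ) : EReal :=
  haveI := hγ
  ((entF F₁ γ.fst μ₁ : ℝ≥0∞) : EReal) + ((entF F₂ γ.snd μ₂ : ℝ≥0∞) : EReal) +
    eIntegral γ.fst (fun x₁ => C x₁ ⟨γ.condKernel x₁, inferInstance⟩)

/-- The weak optimal entropy-transport value `ℰ_C(μ₁,μ₂)`. -/
def wOpt [StandardBorelSpace X₂] [Nonempty X₂]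
    (C : X₁ → ProbabilityMeasure X₂ → EReal) (F₁ F₂ : EntropyFn)
    (μ₁ : Measure X₁) (μ₂ : Measure X₂) : EReal :=
  sInf { e : EReal | ∃ (γ : Measure (X₁ × X₂)) (hγ : IsFiniteMeasure γ),
    e = wCost C F₁ F₂ μ₁ μ₂ γ hγ }

variable [TopologicalSpace X₁] [TopologicalSpace X₂]

/-- The dual feasible set `Λ`. -/
def lamSet (C : X₁ → ProbabilityMeasure X₂ → EReal) (F₁ F₂ : EntropyFn) :
    Set ((X₁ →ᵇ ℝ) × (X₂ →ᵇ ℝ)) :=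
  { φ | (∀ x, φ.1 x ∈ interior F₁.circDom) ∧ (∀ x, φ.2 x ∈ interior F₂.circDom) ∧
      ∀ (x₁ : X₁) (p : ProbabilityMeasure X₂),
        ((φ.1 x₁ + ∫ x₂, φ.2 x₂ ∂(p : Measure X₂) : ℝ) : EReal) ≤ C x₁ p }

/-- The dual feasible set `Λ_R`. -/
def lamRSet (C : X₁ → ProbabilityMeasure X₂ → EReal) (F₁ F₂ : EntropyFn) :
    Set ((X₁ →ᵇ ℝ) × (X₂ →ᵇ ℝ)) :=
  { φ | (∃ b : ℝ, ((b : ℝ) : EReal) < ((F₁.F 0 : ℝ≥0∞) : EReal) ∧ ∀ x, φ.1 x ≤ b) ∧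
        (∃ b : ℝ, ((b : ℝ) : EReal) < ((F₂.F 0 : ℝ≥0∞) : EReal) ∧ ∀ x, φ.2 x ≤ b) ∧
        ∀ (x₁ : X₁) (p : ProbabilityMeasure X₂),
          F₁.revConj (φ.1 x₁) + eIntegral (p : Measure X₂) (fun x₂ => F₂.revConj (φ.2 x₂))
            ≤ C x₁ p }

/-- The dual feasible set `Λ_ET` (constraints tested against all pairs of nonnegative finite
measures; on all other signed measures `ET = +∞`, so those constraints are vacuous). -/
def lamETSet [StandardBorelSpace X₂] [Nonempty X₂]
    (C : X₁ → ProbabilityMeasure X₂ → EReal) (F₁ F₂ : EntropyFn) :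
    Set ((X₁ →ᵇ ℝ) × (X₂ →ᵇ ℝ)) :=
  { φ | ∀ (μ₁ : Measure X₁) (μ₂ : Measure X₂), IsFiniteMeasure μ₁ → IsFiniteMeasure μ₂ →
      (((∫ x, φ.1 x ∂μ₁) + ∫ x, φ.2 x ∂μ₂ : ℝ) : EReal) ≤ wOpt C F₁ F₂ μ₁ μ₂ }

/-- The set `Λ_ET^<`. -/
def lamETltSet [StandardBorelSpace X₂] [Nonempty X₂]
    (C : X₁ → ProbabilityMeasure X₂ → EReal) (F₁ F₂ : EntropyFn) :
    Set ((X₁ →ᵇ ℝ) × (X₂ →ᵇ ℝ)) :=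
  { φ ∈ lamETSet C F₁ F₂ |
      (∃ b : ℝ, ((b : ℝ) : EReal) < ((F₁.F 0 : ℝ≥0∞) : EReal) ∧ ∀ x, φ.1 x ≤ b) ∧
      (∃ b : ℝ, ((b : ℝ) : EReal) < ((F₂.F 0 : ℝ≥0∞) : EReal) ∧ ∀ x, φ.2 x ≤ b) }

/-- `R_C φ(x₁) := inf_{p ∈ 𝒫(X₂)} (C(x₁,p) + ∫ φ dp)`. -/
def RCfun (C : X₁ → ProbabilityMeasure X₂ → EReal) (φ : X₂ →ᵇ ℝ) (x₁ : X₁) : EReal :=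
  ⨅ p : ProbabilityMeasure X₂, C x₁ p + ((∫ x₂, φ x₂ ∂(p : Measure X₂) : ℝ) : EReal)

/-- Property (BM) of an admissible entropy function on a space `X`. -/
def HasBM (X : Type*) [TopologicalSpace X] [MeasurableSpace X] (F : EntropyFn) : Prop :=
  ∀ ψ : X →ᵇ ℝ, (∃ b : ℝ, ((b : ℝ) : EReal) < ((F.F 0 : ℝ≥0∞) : EReal) ∧ ∀ x, ψ x ≤ b) →
    ∃ s : X → ℝ, Measurable s ∧ (∃ M : ℝ, ∀ x, |s x| ≤ M) ∧ (∀ x, 0 < s x) ∧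
      ∀ x, ((F.revF (s x) : ℝ≥0∞) : EReal) + F.revConj (ψ x) = ((s x * ψ x : ℝ) : EReal)

end WOET

/-- The functional `ET` extended to pairs of finite signed measures:
it equals `ℰ_C(μ₁,μ₂)` when both arguments are (induced by) nonnegative finite measures,
and `+∞` otherwise. -/
def ETsgn {X₁ X₂ : Type*} [MeasurableSpace X₁] [MeasurableSpace X₂]
    [StandardBorelSpace X₂] [Nonempty X₂]
    (C : X₁ → ProbabilityMeasure X₂ → EReal) (F₁ F₂ : EntropyFn)
    (ν₁ : SignedMeasure X₁) (ν₂ : SignedMeasure X₂) : EReal :=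
  sInf { e : EReal | ∃ (μ₁ : Measure X₁) (h₁ : IsFiniteMeasure μ₁)
      (μ₂ : Measure X₂) (h₂ : IsFiniteMeasure μ₂),
      ν₁ = @Measure.toSignedMeasure X₁ _ μ₁ h₁ ∧ ν₂ = @Measure.toSignedMeasure X₂ _ μ₂ h₂ ∧
      e = wOpt C F₁ F₂ μ₁ μ₂ }

section Martingale

variable {X : Set ℝ}

/-- The martingale condition for a finite measure on `X × X`:
`∫ y dγ_x(y) = x` for `γ₁`-a.e. `x`. -/
def martCond [StandardBorelSpace ↥X] [Nonempty ↥X]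
    (γ : Measure (↥X × ↥X)) (hγ : IsFiniteMeasure γ) : Prop :=
  haveI := hγ
  ∀ᵐ x ∂γ.fst, (∫ y, (y : ℝ) ∂(γ.condKernel x)) = (x : ℝ)

/-- The martingale optimal entropy transport value `ℰ_M(μ₁,μ₂)` (with an `EReal`-valued
cost `c`). -/
def eMart [StandardBorelSpace ↥X] [Nonempty ↥X]
    (c : ↥X → ↥X → EReal) (F₁ F₂ : EntropyFn) (μ₁ μ₂ : Measure ↥X) : EReal :=
  sInf { e : EReal | ∃ (γ : Measure (↥X × ↥X)) (hγ : IsFiniteMeasure γ), martCond γ hγ ∧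
    e = ((entF F₁ γ.fst μ₁ : ℝ≥0∞) : EReal) + ((entF F₂ γ.snd μ₂ : ℝ≥0∞) : EReal) +
        eIntegral γ (fun q => c q.1 q.2) }

/-- The martingale optimal entropy transport value `ℰ_M(μ₁,μ₂)` (with a `[0,∞]`-valued
cost `c`). -/
def eMartNN [StandardBorelSpace ↥X] [Nonempty ↥X]
    (c : ↥X → ↥X → ℝ≥0∞) (F₁ F₂ : EntropyFn) (μ₁ μ₂ : Measure ↥X) : EReal :=
  sInf { e : EReal | ∃ (γ : Measure (↥X × ↥X)) (hγ : IsFiniteMeasure γ), martCond γ hγ ∧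
    e = ((entF F₁ γ.fst μ₁ + entF F₂ γ.snd μ₂ + ∫⁻ q, c q.1 q.2 ∂γ : ℝ≥0∞) : EReal) }

/-- The dual feasible set `Λ_M` for the martingale problem. -/
def lamM (c : ↥X → ↥X → EReal) (F₁ F₂ : EntropyFn) : Set ((↥X →ᵇ ℝ) × (↥X →ᵇ ℝ)) :=
  { φ | (∀ x, φ.1 x ∈ interior F₁.circDom) ∧ (∀ x, φ.2 x ∈ interior F₂.circDom) ∧
      ∃ h : ↥X →ᵇ ℝ, ∀ x₁ x₂ : ↥X,
        ((φ.1 x₁ + φ.2 x₂ + h x₁ * ((x₂ : ℝ) - (x₁ : ℝ)) : ℝ) : EReal) ≤ c x₁ x₂ }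

/-- The perspective function `r·F(θ/r)` with the convention `r·F(θ/r) = θ·F'_∞` for `r = 0`. -/
def perspFn (F : EntropyFn) (r θ : ℝ) : ℝ≥0∞ :=
  if r = 0 then ENNReal.ofReal θ * F.recC else ENNReal.ofReal r * F.F (θ / r)

/-- The homogeneous marginal perspective cost `H(x₁,r₁;x₂,r₂)` (the dependence on
`(x₁,x₂)` is through the value `c = c(x₁,x₂)`). -/
def Hcost (F₁ F₂ : EntropyFn) (c : ℝ≥0∞) (r₁ r₂ : ℝ) : ℝ≥0∞ :=
  if c ≠ ∞ then
    ⨅ θ : Ioi (0:ℝ), perspFn F₁ r₁ (θ : ℝ) + perspFn F₂ r₂ (θ : ℝ) + ENNReal.ofReal (θ : ℝ) * c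
  else F₁.F 0 * ENNReal.ofReal r₁ + F₂.F 0 * ENNReal.ofReal r₂

/-- The functional `ℋ(μ₁,μ₂|γ)`. -/
def hMargFun (F₁ F₂ : EntropyFn) (c : ↥X → ↥X → ℝ≥0∞) (μ₁ μ₂ : Measure ↥X)
    (γ : Measure (↥X × ↥X)) : ℝ≥0∞ :=
  (∫⁻ q, Hcost F₁ F₂ (c q.1 q.2) ((μ₁.rnDeriv γ.fst q.1).toReal)
      ((μ₂.rnDeriv γ.snd q.2).toReal) ∂γ)
    + F₁.F 0 * (μ₁.singularPart γ.fst) Set.univ + F₂.F 0 * (μ₂.singularPart γ.snd) Set.univ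

/-- The functional `ℛ(μ₁,μ₂|γ)`. -/
def rMargFun (F₁ F₂ : EntropyFn) (c : ↥X → ↥X → ℝ≥0∞) (μ₁ μ₂ : Measure ↥X)
    (γ : Measure (↥X × ↥X)) : ℝ≥0∞ :=
  revEntF F₁ μ₁ γ.fst + revEntF F₂ μ₂ γ.snd + ∫⁻ q, c q.1 q.2 ∂γ

/-- The first `p`-homogeneous marginal of a measure on `Y × Y`, `Y = X × [0,∞)`. -/
def hMarg1 (p : ℝ) (α : Measure ((↥X × ℝ≥0) × (↥X × ℝ≥0))) : Measure ↥X :=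
  Measure.map (fun q => q.1.1) (α.withDensity fun q => (q.1.2 : ℝ≥0∞) ^ p)

/-- The second `p`-homogeneous marginal of a measure on `Y × Y`, `Y = X × [0,∞)`. -/
def hMarg2 (p : ℝ) (α : Measure ((↥X × ℝ≥0) × (↥X × ℝ≥0))) : Measure ↥X :=
  Measure.map (fun q => q.2.1) (α.withDensity fun q => (q.2.2 : ℝ≥0∞) ^ p)

/-- Membership in the homogeneous constraint set `ℋ^p_{M,≤}(μ₁,μ₂)`. -/
def memHpM (p : ℝ) (μ₁ μ₂ : Measure ↥X) (α : Measure ((↥X × ℝ≥0) × (↥X × ℝ≥0))) : Prop :=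
  IsFiniteMeasure α ∧ (∫⁻ q, (q.1.2 : ℝ≥0∞) ^ p + (q.2.2 : ℝ≥0∞) ^ p ∂α) ≠ ∞ ∧
    hMarg1 p α ≤ μ₁ ∧ hMarg2 p α ≤ μ₂ ∧
    ∀ h : ↥X →ᵇ ℝ, (∫ q, h q.1.1 * ((q.2.1 : ℝ) - (q.1.1 : ℝ)) ∂α) = 0

end Martingale

/-!
The functional `∫ C(x, γ_x) dγ₁` is not linear in `γ`. It becomes linear after relaxing couplings to
measures `Γ` on `X₁ × 𝒫(X₂)`: the cost is `∫ C dΓ`, and the second marginal is the barycenter of the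
projection of `Γ` to `𝒫(X₂)`.

When the spaces are compact, the dual value is a concave functional of the cost, bounded on the open
convex set of continuous functions lying strictly below `C`. Hahn–Banach separation and the Riesz
representation theorem turn this bound into a measure `Γ`, and since each entropy is the
supremum of `∫ φ dμ - ∫ R*(φ) dγ` over its potentials, the relaxed value at `Γ` is at most the dual
value. Polish spaces embed into compact metrizable ones, where `C` is replaced by its lower
semicontinuous extension; superlinearity makes measures of finite entropy absolutely continuous,
so that they stay concentrated on the original spaces.

Finally, averaging `Γ` over `𝒫(X₂)` gives a coupling `γ` with the same marginals whose conditional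
laws are barycenters of those of `Γ`; by Jensen's inequality for the convex functions `C(x, ·)` this
does not increase the cost.
-/

theorem coe_lt_coe_ennreal_iff {x : ℝ} {a : ℝ≥0∞} :
    (x : EReal) < (a : EReal) ↔ x < 0 ∨ ENNReal.ofReal x < a := by
  rcases lt_or_ge x 0 with hx | hx
  · have : (x : EReal) < 0 := by exact_mod_cast hx
    simp only [hx, true_or, iff_true]
    exact this.trans_le (EReal.coe_ennreal_nonneg a)
  · rw [← EReal.coe_ennreal_lt_coe_ennreal_iff, EReal.coe_ennreal_ofReal, max_eq_left hx]
    simp only [hx.not_gt, false_or]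

theorem coe_lt_coe_ennreal_iff_lt_toReal {x : ℝ} {a : ℝ≥0∞} (ha : a ≠ ∞) :
    (x : EReal) < (a : EReal) ↔ x < a.toReal := by
  lift a to ℝ≥0 using ha
  exact EReal.coe_lt_coe_iff

namespace EntropyFn

variable (F : EntropyFn)

theorem convexOn_toReal : ConvexOn ℝ {s | 0 ≤ s ∧ F.F s ≠ ∞} fun s => (F.F s).toReal := by
  have conv : ∀ ⦃x y a b : ℝ⦄, 0 ≤ x → 0 ≤ y → 0 ≤ a → 0 ≤ b → a + b = 1 →
      F.F (a • x + b • y) ≤ ENNReal.ofReal a * F.F x + ENNReal.ofReal b * F.F y := by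
    intro x y a b hx hy ha hb hab
    obtain rfl : b = 1 - a := by linarith
    exact F.convex' x hx y hy a ha (by linarith)
  have fin : ∀ {x : ℝ} (a : ℝ), F.F x ≠ ∞ → ENNReal.ofReal a * F.F x ≠ ∞ := fun a hx =>
    ENNReal.mul_ne_top ENNReal.ofReal_ne_top hx
  constructor
  · rintro x ⟨hx, hFx⟩ y ⟨hy, hFy⟩ a b ha hb hab
    refine ⟨add_nonneg (mul_nonneg ha hx) (mul_nonneg hb hy), ?_⟩
    exact ne_top_of_le_ne_top (ENNReal.add_ne_top.2 ⟨fin a hFx, fin b hFy⟩)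
      (conv hx hy ha hb hab)
  · rintro x ⟨hx, hFx⟩ y ⟨hy, hFy⟩ a b ha hb hab
    have := ENNReal.toReal_mono (ENNReal.add_ne_top.2 ⟨fin a hFx, fin b hFy⟩)
      (conv hx hy ha hb hab)
    rwa [ENNReal.toReal_add (fin a hFx) (fin b hFy), ENNReal.toReal_mul, ENNReal.toReal_mul,
      ENNReal.toReal_ofReal ha, ENNReal.toReal_ofReal hb] at this

/-- The effective domain of `R*`, namely the half-line `(-∞, F(0))`. -/
def dualDom : Set ℝ := {ψ | (ψ : EReal) < ((F.F 0 : ℝ≥0∞) : EReal)}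

/-- The chord values `(ψ - F(s)) / s` over `s > 0` in the domain of `F`. With `s = 1/r` they are
the values `rψ - R(r)` at `r > 0`, so their supremum is `R*(ψ)`. -/
def chordValues (ψ : ℝ) : Set ℝ :=
  {v | ∃ s : ℝ, 0 < s ∧ F.F s ≠ ∞ ∧ v = (ψ - (F.F s).toReal) / s}

/-- The conjugate `R*` of the reverse entropy as a real function. It is the true conjugate on
`F.dualDom` when `F` is superlinear; off `F.dualDom` the supremum may take a junk value. -/
def revConjReal (ψ : ℝ) : ℝ := sSup (F.chordValues ψ)

theorem chordValues_nonempty (ψ : ℝ) : (F.chordValues ψ).Nonempty :=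
  let ⟨s, hs, h⟩ := F.dom
  ⟨_, s, hs, h, rfl⟩

theorem mem_dualDom_of_neg {ψ : ℝ} (h : ψ < 0) : ψ ∈ F.dualDom :=
  coe_lt_coe_ennreal_iff.2 (Or.inl h)

theorem mem_dualDom_of_le {ψ χ : ℝ} (h : ψ ≤ χ) (hχ : χ ∈ F.dualDom) : ψ ∈ F.dualDom :=
  (EReal.coe_le_coe_iff.2 h).trans_lt hχ

theorem isOpen_dualDom : IsOpen F.dualDom :=
  isOpen_lt continuous_coe_real_ereal continuous_const

theorem convex_dualDom : Convex ℝ F.dualDom :=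
  Set.OrdConnected.convex ⟨fun _ _ _ hy _ hz => F.mem_dualDom_of_le hz.2 hy⟩

theorem exists_forall_lt_coe_of_mem_dualDom {ψ : ℝ} (hψ : ψ ∈ F.dualDom) :
    ∃ δ > 0, ∀ s, 0 ≤ s → s < δ → (ψ : EReal) < ((F.F s : ℝ≥0∞) : EReal) := by
  rcases coe_lt_coe_ennreal_iff.1 hψ with h | h
  · exact ⟨1, one_pos, fun s _ _ => coe_lt_coe_ennreal_iff.2 (Or.inl h)⟩
  · have hnear := F.lsc 0 self_mem_Ici _ h
    rw [eventually_nhdsWithin_iff, Metric.eventually_nhds_iff] at hnear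
    obtain ⟨δ, hδ, hlt⟩ := hnear
    refine ⟨δ, hδ, fun s hs hsδ => coe_lt_coe_ennreal_iff.2 (Or.inr (hlt ?_ hs))⟩
    rwa [Real.dist_eq, sub_zero, abs_of_nonneg hs]

theorem bddAbove_chordValues {ψ : ℝ} (hψ : ψ ∈ F.dualDom) : BddAbove (F.chordValues ψ) := by
  obtain ⟨δ, hδ, hlt⟩ := F.exists_forall_lt_coe_of_mem_dualDom hψ
  refine ⟨|ψ| / δ, ?_⟩
  rintro v ⟨s, hs, hF, rfl⟩
  rcases lt_or_ge s δ with h | h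
  · have hψs : ψ < (F.F s).toReal := (coe_lt_coe_ennreal_iff_lt_toReal hF).1 (hlt s hs.le h)
    exact (div_nonpos_of_nonpos_of_nonneg (by linarith) hs.le).trans (by positivity)
  · have : 0 ≤ (F.F s).toReal := ENNReal.toReal_nonneg
    exact div_le_div₀ (abs_nonneg _) (by linarith [le_abs_self ψ]) hδ h

theorem revConjReal_le_iff {ψ r : ℝ} (hψ : ψ ∈ F.dualDom) :
    F.revConjReal ψ ≤ r ↔ ∀ s, 0 < s → F.F s ≠ ∞ → ψ - s * r ≤ (F.F s).toReal := by
  rw [revConjReal, csSup_le_iff (F.bddAbove_chordValues hψ) (F.chordValues_nonempty ψ)]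
  constructor
  · intro h s hs hF
    have := h _ ⟨s, hs, hF, rfl⟩
    rw [div_le_iff₀ hs] at this
    linarith
  · rintro h _ ⟨s, hs, hF, rfl⟩
    rw [div_le_iff₀ hs]
    linarith [h s hs hF]

theorem sub_mul_revConjReal_le {ψ s : ℝ} (hψ : ψ ∈ F.dualDom) (hs : 0 ≤ s) (hF : F.F s ≠ ∞) :
    ψ - s * F.revConjReal ψ ≤ (F.F s).toReal := by
  rcases hs.eq_or_lt with rfl | hs
  · have := (coe_lt_coe_ennreal_iff_lt_toReal hF).1 hψ
    linarith
  · exact (F.revConjReal_le_iff hψ).1 le_rfl s hs hF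

theorem ofReal_sub_mul_revConjReal_le {ψ s : ℝ} (hψ : ψ ∈ F.dualDom) (hs : 0 ≤ s) :
    ENNReal.ofReal (ψ - s * F.revConjReal ψ) ≤ F.F s := by
  by_cases hF : F.F s = ∞
  · exact hF ▸ le_top
  · exact ENNReal.ofReal_le_of_le_toReal (F.sub_mul_revConjReal_le hψ hs hF)

theorem convexOn_revConjReal : ConvexOn ℝ F.dualDom F.revConjReal := by
  refine ⟨F.convex_dualDom, fun x hx y hy a b ha hb hab => ?_⟩
  refine (F.revConjReal_le_iff (F.convex_dualDom hx hy ha hb hab)).2 fun s hs hF => ?_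
  obtain rfl : b = 1 - a := by linarith
  have hxs := mul_le_mul_of_nonneg_left (F.sub_mul_revConjReal_le hx hs.le hF) ha
  have hys := mul_le_mul_of_nonneg_left (F.sub_mul_revConjReal_le hy hs.le hF) hb
  simp only [smul_eq_mul]
  linarith

theorem continuousOn_revConjReal : ContinuousOn F.revConjReal F.dualDom :=
  F.convexOn_revConjReal.continuousOn F.isOpen_dualDom

theorem monotoneOn_revConjReal : MonotoneOn F.revConjReal F.dualDom := fun a ha b hb hab =>
  (F.revConjReal_le_iff ha).2 fun s hs hF => by
    linarith [F.sub_mul_revConjReal_le hb hs.le hF]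

theorem revConjReal_nonpos {ψ : ℝ} (h : ψ < 0) : F.revConjReal ψ ≤ 0 :=
  (F.revConjReal_le_iff (F.mem_dualDom_of_neg h)).2 fun s _ _ => by
    linarith [ENNReal.toReal_nonneg (a := F.F s)]

theorem abs_revConjReal_le {A b ψ : ℝ} (hb : b ∈ F.dualDom) (hψ : ψ ∈ Icc A b) :
    |F.revConjReal ψ| ≤ |F.revConjReal A| + |F.revConjReal b| := by
  have hψD := F.mem_dualDom_of_le hψ.2 hb
  have hlow := F.monotoneOn_revConjReal (F.mem_dualDom_of_le hψ.1 hψD) hψD hψ.1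
  have hupp := F.monotoneOn_revConjReal hψD hb hψ.2
  rw [abs_le]
  constructor
  · linarith [neg_abs_le (F.revConjReal A), abs_nonneg (F.revConjReal b)]
  · linarith [le_abs_self (F.revConjReal b), abs_nonneg (F.revConjReal A)]

namespace Superlinear

variable {F}

theorem exists_slope_lt (hF : F.Superlinear) (M : ℝ) {s₀ : ℝ} (hs₀ : 0 < s₀) :
    ∃ s₁ > s₀, ENNReal.ofReal ((F.F s₀).toReal + M * (s₁ - s₀)) < F.F s₁ := by
  set m := (F.F s₀).toReal + |M|
  have hm : 0 ≤ m := by positivity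
  have hfreq : ∃ᶠ s : ℝ in atTop, ENNReal.ofReal m < F.F s / ENNReal.ofReal s := by
    refine frequently_lt_of_lt_limsup (by isBoundedDefault) ?_
    change _ < F.recC
    exact (show F.recC = ∞ from hF) ▸ ENNReal.ofReal_lt_top
  obtain ⟨s₁, hlt, hs₁⟩ := (hfreq.and_eventually (eventually_gt_atTop (max s₀ 1))).exists
  obtain ⟨h₀, h₁⟩ := max_lt_iff.1 hs₁
  refine ⟨s₁, h₀, (ENNReal.ofReal_le_ofReal (?_ : _ ≤ m * s₁)).trans_lt ?_⟩
  · nlinarith [le_abs_self M, abs_nonneg M, ENNReal.toReal_nonneg (a := F.F s₀)]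
  · rwa [ENNReal.lt_div_iff_mul_lt (Or.inl (by simpa using h₀.trans' hs₀))
      (Or.inl ENNReal.ofReal_ne_top), ← ENNReal.ofReal_mul hm] at hlt

theorem exists_forall_mul_sub_le (hF : F.Superlinear) {M : ℝ} (hM : 0 ≤ M) :
    ∃ c : ℝ, ∀ s, 0 ≤ s → F.F s ≠ ∞ → M * s - c ≤ (F.F s).toReal := by
  obtain ⟨s₀, hs₀, hF₀⟩ := F.dom
  obtain ⟨s₁, h₀₁, hlt⟩ := hF.exists_slope_lt M hs₀
  refine ⟨M * s₁, fun s hs hFs => ?_⟩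
  rcases le_or_gt s s₁ with h | h
  · nlinarith [ENNReal.toReal_nonneg (a := F.F s)]
  · have mem₀ : s₀ ∈ {s | 0 ≤ s ∧ F.F s ≠ ∞} := ⟨hs₀.le, hF₀⟩
    have mem : s ∈ {s | 0 ≤ s ∧ F.F s ≠ ∞} := ⟨hs, hFs⟩
    have mem₁ : s₁ ∈ {s | 0 ≤ s ∧ F.F s ≠ ∞} :=
      F.convexOn_toReal.1.ordConnected.out mem₀ mem ⟨h₀₁.le, h.le⟩
    have hsec := F.convexOn_toReal.secant_mono mem₀ mem₁ mem h₀₁.ne' (h₀₁.trans h).ne' h.le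
    have hslope : M ≤ ((F.F s₁).toReal - (F.F s₀).toReal) / (s₁ - s₀) := by
      rw [le_div_iff₀ (sub_pos.2 h₀₁)]
      rw [ENNReal.ofReal_lt_iff_lt_toReal (by nlinarith [ENNReal.toReal_nonneg (a := F.F s₀)])
        mem₁.2] at hlt
      linarith
    have hMs := (le_div_iff₀ (sub_pos.2 (h₀₁.trans h))).1 (hslope.trans hsec)
    nlinarith [ENNReal.toReal_nonneg (a := F.F s₀)]

theorem exists_neg_revConjReal_le (hF : F.Superlinear) (M : ℝ) :
    ∃ k < 0, F.revConjReal k ≤ M := by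
  obtain ⟨c, hc⟩ := hF.exists_forall_mul_sub_le (le_max_right (-M) 0)
  have hk : min (-c) (-1) < 0 := by simp
  refine ⟨_, hk, (F.revConjReal_le_iff (F.mem_dualDom_of_neg hk)).2 fun s hs hFs => ?_⟩
  have hMs : -M * s ≤ max (-M) 0 * s := mul_le_mul_of_nonneg_right (le_max_left _ _) hs.le
  linarith [hc s hs.le hFs, min_le_left (-c) (-1)]

end Superlinear

theorem coe_mul_sub_revF {s ψ : ℝ} (hs : 0 < s) (hF : F.F (1 / s) ≠ ∞) :
    ((s * ψ : ℝ) : EReal) - ((F.revF s : ℝ≥0∞) : EReal)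
      = (((ψ - (F.F (1 / s)).toReal) / (1 / s) : ℝ) : EReal) := by
  have hrev : F.revF s ≠ ∞ := by
    rw [revF, if_pos hs]
    exact ENNReal.mul_ne_top ENNReal.ofReal_ne_top hF
  rw [← EReal.coe_ennreal_toReal hrev, ← EReal.coe_sub, revF, if_pos hs, ENNReal.toReal_mul,
    ENNReal.toReal_ofReal hs.le]
  congr 1
  field_simp

theorem Superlinear.revConj_eq_coe {F : EntropyFn} (hF : F.Superlinear) {ψ : ℝ}
    (hψ : ψ ∈ F.dualDom) : F.revConj ψ = (F.revConjReal ψ : EReal) := by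
  apply le_antisymm
  · refine iSup_le fun ⟨s, hs⟩ => ?_
    by_cases htop : F.revF s = ∞
    · simp [htop]
    have hs : 0 < s := (show (0 : ℝ) ≤ s from hs).lt_of_ne fun h =>
      htop (by rw [revF, if_neg h.not_lt]; exact hF)
    have hFs : F.F (1 / s) ≠ ∞ := fun h => htop (by
      rw [revF, if_pos hs, h, ENNReal.mul_top (by simpa using hs)])
    change ((s * ψ : ℝ) : EReal) - _ ≤ _
    rw [F.coe_mul_sub_revF hs hFs, EReal.coe_le_coe_iff]
    exact le_csSup (F.bddAbove_chordValues hψ) ⟨1 / s, by positivity, hFs, rfl⟩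
  · refine EReal.ge_of_forall_gt_iff_ge.1 fun z hz => ?_
    obtain ⟨_, ⟨s, hs, hFs, rfl⟩, hv⟩ :=
      exists_lt_of_lt_csSup (F.chordValues_nonempty ψ) (EReal.coe_lt_coe_iff.1 hz)
    have hinv : 0 < 1 / s := by positivity
    refine le_trans ?_ (le_iSup _ (⟨1 / s, hinv.le⟩ : Ici (0 : ℝ)))
    change _ ≤ ((1 / s * ψ : ℝ) : EReal) - _
    rw [F.coe_mul_sub_revF hinv (by rwa [one_div_one_div]), EReal.coe_le_coe_iff, one_div_one_div]
    exact hv.le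

/-- The epigraph of `F`. -/
def epigraph : Set (ℝ × ℝ) := {q | 0 ≤ q.1 ∧ 0 ≤ q.2 ∧ F.F q.1 ≤ ENNReal.ofReal q.2}

theorem isClosed_epigraph : IsClosed F.epigraph := by
  have hlsc := (lowerSemicontinuousOn_iff_isClosed_epigraph isClosed_Ici).1 F.lsc
  have hcont : Continuous fun q : ℝ × ℝ => (q.1, ENNReal.ofReal q.2) :=
    continuous_fst.prodMk (ENNReal.continuous_ofReal.comp continuous_snd)
  have heq : F.epigraph = {q : ℝ × ℝ | 0 ≤ q.2} ∩ (fun q : ℝ × ℝ => (q.1, ENNReal.ofReal q.2)) ⁻¹'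
      {p : ℝ × ℝ≥0∞ | p.1 ∈ Ici (0 : ℝ) ∧ F.F p.1 ≤ p.2} := by
    ext q
    simp only [epigraph, mem_ofPred_eq, mem_inter_iff, mem_preimage, mem_Ici]
    tauto
  rw [heq]
  exact (isClosed_le continuous_const continuous_snd).inter (hlsc.preimage hcont)

theorem mem_epigraph_iff {s v : ℝ} :
    (s, v) ∈ F.epigraph ↔ s ∈ {s | 0 ≤ s ∧ F.F s ≠ ∞} ∧ (F.F s).toReal ≤ v := by
  constructor
  · rintro ⟨hs, hv, hF⟩
    exact ⟨⟨hs, ne_top_of_le_ne_top ENNReal.ofReal_ne_top hF⟩, ENNReal.toReal_le_of_le_ofReal hv hF⟩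
  · rintro ⟨⟨hs, hF⟩, hv⟩
    have hv0 := ENNReal.toReal_nonneg.trans hv
    exact ⟨hs, hv0, (ENNReal.le_ofReal_iff_toReal_le hF hv0).2 hv⟩

theorem convex_epigraph : Convex ℝ F.epigraph := by
  have : F.epigraph = {p : ℝ × ℝ | p.1 ∈ {s | 0 ≤ s ∧ F.F s ≠ ∞} ∧ (F.F p.1).toReal ≤ p.2} :=
    Set.ext fun _ => F.mem_epigraph_iff
  exact this ▸ F.convexOn_toReal.convex_epigraph

theorem exists_separating_line {f c : ℝ}
    (hc : (c : EReal) < ((F.F f : ℝ≥0∞) : EReal)) :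
    ∃ α β u : ℝ, 0 ≤ β ∧ α * f + β * c < u ∧
      ∀ s, 0 ≤ s → F.F s ≠ ∞ → u < α * s + β * (F.F s).toReal := by
  have hnot : (f, c) ∉ F.epigraph := fun h =>
    (F.mem_epigraph_iff.1 h).2.not_gt
      ((coe_lt_coe_ennreal_iff_lt_toReal (F.mem_epigraph_iff.1 h).1.2).1 hc)
  obtain ⟨g, u, hgf, hg⟩ :=
    geometric_hahn_banach_point_closed F.convex_epigraph F.isClosed_epigraph hnot
  have hcoord : ∀ s v, g (s, v) = g (1, 0) * s + g (0, 1) * v := fun s v => by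
    have : ((s, v) : ℝ × ℝ) = s • ((1, 0) : ℝ × ℝ) + v • ((0, 1) : ℝ × ℝ) := by simp
    rw [this, map_add, map_smul, map_smul, smul_eq_mul, smul_eq_mul, mul_comm s, mul_comm v]
  have habove : ∀ s v, 0 ≤ s → F.F s ≠ ∞ → (F.F s).toReal ≤ v →
      u < g (1, 0) * s + g (0, 1) * v := fun s v hs hF hv =>
    hcoord s v ▸ hg _ (F.mem_epigraph_iff.2 ⟨⟨hs, hF⟩, hv⟩)
  refine ⟨g (1, 0), g (0, 1), u, ?_, hcoord f c ▸ hgf, fun s hs hF => habove s _ hs hF le_rfl⟩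
  obtain ⟨s₀, hs₀, hF₀⟩ := F.dom
  by_contra! hneg
  have hup := habove s₀ _ hs₀.le hF₀ (le_max_left _ ((u - g (1, 0) * s₀) / g (0, 1)))
  have := mul_le_mul_of_nonpos_left
    (le_max_right (F.F s₀).toReal ((u - g (1, 0) * s₀) / g (0, 1))) hneg.le
  rw [mul_div_cancel₀ _ hneg.ne] at this
  linarith

theorem exists_affine_minorant_gt {f c : ℝ}
    (hc : (c : EReal) < ((F.F f : ℝ≥0∞) : EReal)) :
    ∃ a b : ℝ, c < a + b * f ∧ ∀ s, 0 ≤ s → F.F s ≠ ∞ → a + b * s ≤ (F.F s).toReal := by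
  obtain ⟨α, β, u, hβ, hsep, habove⟩ := F.exists_separating_line hc
  rcases hβ.eq_or_lt with rfl | hβ
  · -- A vertical line: `u - α s` is negative on the domain and positive at `f`, so scale it up.
    have hd : 0 < u - α * f := by linarith
    set n := (|c| + 1) / (u - α * f) with hn
    have hn0 : 0 < n := by positivity
    refine ⟨n * u, -(n * α), ?_, fun s hs hF => ?_⟩
    · have : n * (u - α * f) = |c| + 1 := by rw [hn]; field_simp
      linarith [le_abs_self c]
    · have h0 : 0 ≤ (F.F s).toReal := ENNReal.toReal_nonneg
      nlinarith [habove s hs hF]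
  · refine ⟨u / β, -α / β, ?_, fun s hs hF => ?_⟩
    · rw [show u / β + -α / β * f = (u - α * f) / β by ring, lt_div_iff₀ hβ]
      linarith
    · rw [show u / β + -α / β * s = (u - α * s) / β by ring, div_le_iff₀ hβ]
      linarith [habove s hs hF]

theorem exists_mem_dualDom_lt {f c : ℝ} (hf : 0 ≤ f)
    (hc : (c : EReal) < ((F.F f : ℝ≥0∞) : EReal)) :
    ∃ ψ ∈ F.dualDom, c < ψ - f * F.revConjReal ψ := by
  obtain ⟨a, b, hlt, hle⟩ := F.exists_affine_minorant_gt hc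
  obtain ⟨ψ, hcψ, hψa⟩ : ∃ ψ, c - b * f < ψ ∧ ψ < a := exists_between (by linarith)
  have hψ : ψ ∈ F.dualDom := by
    by_cases h0 : F.F 0 = ∞
    · exact (show (ψ : EReal) < F.F 0 from h0 ▸ EReal.coe_lt_top ψ)
    · exact (coe_lt_coe_ennreal_iff_lt_toReal h0).2 (by linarith [hle 0 le_rfl h0])
  have hconj : F.revConjReal ψ ≤ -b :=
    (F.revConjReal_le_iff hψ).2 fun s hs hF => by linarith [hle s hs.le hF]
  exact ⟨ψ, hψ, by nlinarith⟩

theorem exists_rat_mem_dualDom_lt {f c : ℝ} (hf : 0 ≤ f)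
    (hc : (c : EReal) < ((F.F f : ℝ≥0∞) : EReal)) :
    ∃ q : ℚ, (q : ℝ) ∈ F.dualDom ∧ c < q - f * F.revConjReal q := by
  obtain ⟨ψ, hψ, hlt⟩ := F.exists_mem_dualDom_lt hf hc
  have hmem := F.isOpen_dualDom.mem_nhds hψ
  have hcont : ContinuousAt (fun ψ => ψ - f * F.revConjReal ψ) ψ :=
    continuousAt_id.sub (continuousAt_const.mul (F.continuousOn_revConjReal.continuousAt hmem))
  exact Rat.denseRange_cast.mem_nhds (inter_mem hmem (hcont.eventually_const_lt hlt))

end EntropyFn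

theorem coe_integral_le_coe_lintegral {X : Type*} [MeasurableSpace X] {μ : Measure X} {g : X → ℝ}
    (hg : Integrable g μ) :
    ((∫ x, g x ∂μ : ℝ) : EReal) ≤ ((∫⁻ x, ENNReal.ofReal (g x) ∂μ : ℝ≥0∞) : EReal) := by
  rw [← EReal.coe_ennreal_toReal hg.lintegral_lt_top.ne, EReal.coe_le_coe_iff,
    integral_eq_lintegral_pos_part_sub_lintegral_neg_part hg]
  exact sub_le_self _ ENNReal.toReal_nonneg

theorem add_ofReal_le_iSup_ofReal_add {g : ℝ≥0∞} {v : ℕ → ℝ} {w : ℝ} (hw : 0 ≤ w)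
    (h : ∀ c : ℝ, (c : EReal) < (g : EReal) → ∃ n, c < v n) :
    g + ENNReal.ofReal w ≤ ⨆ n, ENNReal.ofReal (v n + w) := by
  refine le_of_forall_lt fun b hb => ?_
  lift b to ℝ≥0 using hb.ne_top
  have hbw : ((b - w : ℝ) : EReal) < (g : EReal) := by
    refine coe_lt_coe_ennreal_iff.2 ((lt_or_ge (b : ℝ) w).imp (by simp) fun hwb => ?_)
    rw [ENNReal.ofReal_sub _ hw, ENNReal.ofReal_coe_nnreal]
    exact (ENNReal.sub_lt_iff_lt_right ENNReal.ofReal_ne_top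
      (ENNReal.ofReal_le_of_le_toReal hwb)).2 hb
  obtain ⟨n, hn⟩ := h _ hbw
  have hbv : (b : ℝ) < v n + w := sub_lt_iff_lt_add.1 hn
  refine lt_iSup_iff.2 ⟨n, ?_⟩
  rw [← ENNReal.ofReal_coe_nnreal, ENNReal.ofReal_lt_ofReal_iff']
  exact ⟨hbv, b.2.trans_lt hbv⟩

section MonotoneApproximation

variable {X : Type*} [MeasurableSpace X] {μ : Measure X} {G : X → ℝ≥0∞} {a : ℝ}

theorem exists_lt_integral_of_lt_lintegral_of_nonneg {h : ℕ → X → ℝ}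
    (hmeas : ∀ n, Measurable (h n)) (hint : ∀ n, Integrable (h n) μ) (hnonneg : ∀ n x, 0 ≤ h n x)
    (hmono : Monotone h) (hG : ∀ x, G x ≤ ⨆ n, ENNReal.ofReal (h n x))
    (ha : (a : EReal) < ((∫⁻ x, G x ∂μ : ℝ≥0∞) : EReal)) : ∃ n, a < ∫ x, h n x ∂μ := by
  have hsup : ∫⁻ x, G x ∂μ ≤ ⨆ n, ENNReal.ofReal (∫ x, h n x ∂μ) := by
    simp_rw [fun n => ofReal_integral_eq_lintegral_ofReal (hint n) (ae_of_all μ (hnonneg n))]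
    rw [← lintegral_iSup (fun n => (hmeas n).ennreal_ofReal)
      fun i j hij x => ENNReal.ofReal_le_ofReal (hmono hij x)]
    exact lintegral_mono hG
  rcases coe_lt_coe_ennreal_iff.1 ha with h0 | h0
  · exact ⟨0, h0.trans_le (integral_nonneg (hnonneg 0))⟩
  · obtain ⟨n, hn⟩ := lt_iSup_iff.1 (h0.trans_le hsup)
    exact ⟨n, (ENNReal.ofReal_lt_ofReal_iff'.1 hn).1⟩

theorem exists_lt_integral_of_lt_lintegral {h : ℕ → X → ℝ} (hmeas : ∀ n, Measurable (h n))
    (hint : ∀ n, Integrable (h n) μ) (hmono : Monotone h)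
    (hG : ∀ x (c : ℝ), (c : EReal) < ((G x : ℝ≥0∞) : EReal) → ∃ n, c < h n x)
    (ha : (a : EReal) < ((∫⁻ x, G x ∂μ : ℝ≥0∞) : EReal)) : ∃ n, a < ∫ x, h n x ∂μ := by
  -- Adding the negative part of `h 0` makes the whole sequence nonnegative.
  set w : X → ℝ := fun x => max (-h 0 x) 0
  have hwmeas : Measurable w := (hmeas 0).neg.max measurable_const
  have hwint : Integrable w μ := (hint 0).neg_part
  have hw0 : ∀ x, 0 ≤ w x := fun x => le_max_right _ _
  have hle : ∀ x, G x + ENNReal.ofReal (w x) ≤ ⨆ n, ENNReal.ofReal ((h n + w) x) :=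
    fun x => add_ofReal_le_iSup_ofReal_add (hw0 x) (hG x)
  have hlt : ((a + ∫ x, w x ∂μ : ℝ) : EReal)
      < ((∫⁻ x, G x + ENNReal.ofReal (w x) ∂μ : ℝ≥0∞) : EReal) := by
    rw [lintegral_add_right _ hwmeas.ennreal_ofReal, EReal.coe_ennreal_add,
      ← ofReal_integral_eq_lintegral_ofReal hwint (ae_of_all μ hw0), EReal.coe_ennreal_ofReal,
      max_eq_left (integral_nonneg hw0), EReal.coe_add]
    exact EReal.add_lt_add_right_coe ha _
  obtain ⟨n, hn⟩ := exists_lt_integral_of_lt_lintegral_of_nonneg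
    (fun n => (hmeas n).add hwmeas) (fun n => (hint n).add hwint)
    (fun n x => neg_le_iff_add_nonneg'.1 ((neg_le_neg (hmono n.zero_le x)).trans (le_max_left _ _)))
    (fun i j hij x => add_le_add_left (hmono hij x) _) hle hlt
  rw [integral_add' (hint n) hwint] at hn
  exact ⟨n, lt_of_add_lt_add_right hn⟩

variable {V : ℕ → X → ℝ}

theorem exists_simpleFunc_eq_partialSups (hV : ∀ n, Measurable (V n)) (n : ℕ) :
    ∃ φ : SimpleFunc X ℕ, ∀ x, V (φ x) x = partialSups V n x := by
  induction n with
  | zero => exact ⟨.const X 0, fun x => by simp⟩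
  | succ n ih =>
    obtain ⟨φ, hφ⟩ := ih
    refine ⟨.piecewise {x | V (φ x) x ≤ V (n + 1) x}
      (measurableSet_le (φ.measurable_bind V hV) (hV _)) (.const X (n + 1)) φ, fun x => ?_⟩
    rw [partialSups_add_one, Pi.sup_apply, ← hφ x]
    by_cases hx : V (φ x) x ≤ V (n + 1) x
    · simp [hx]
    · simp [hx, (not_le.1 hx).le]

theorem exists_simpleFunc_lt_integral (hV : ∀ n, Measurable (V n))
    (hint : ∀ n, Integrable (V n) μ)
    (hG : ∀ x (c : ℝ), (c : EReal) < ((G x : ℝ≥0∞) : EReal) → ∃ n, c < V n x)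
    (ha : (a : EReal) < ((∫⁻ x, G x ∂μ : ℝ≥0∞) : EReal)) :
    ∃ φ : SimpleFunc X ℕ, Integrable (fun x => V (φ x) x) μ ∧ a < ∫ x, V (φ x) x ∂μ := by
  choose φ hφ using exists_simpleFunc_eq_partialSups hV
  have hmeas : ∀ n, Measurable (partialSups V n) := fun n =>
    (funext (hφ n) : _ = partialSups V n) ▸ (φ n).measurable_bind V hV
  have hsupint : ∀ n, Integrable (partialSups V n) μ := by
    intro n
    induction n with
    | zero => simpa using hint 0
    | succ n ih => exact partialSups_add_one V n ▸ ih.sup (hint (n + 1))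
  obtain ⟨n, hn⟩ := exists_lt_integral_of_lt_lintegral hmeas hsupint (partialSups_monotone V)
    (fun x c hc => (hG x c hc).imp fun n hn => hn.trans_le (le_partialSups V n x)) ha
  have heq : partialSups V n = fun x => V (φ n x) x := (funext (hφ n)).symm
  rw [heq] at hn
  exact ⟨φ n, heq ▸ hsupint n, hn⟩

variable {ν : Measure X} {H : X → ℝ≥0∞} {W : ℕ → X → ℝ}

theorem exists_simpleFunc_lt_integral_add_integral (hμν : μ ⟂ₘ ν) (hV : ∀ n, Measurable (V n))
    (hVint : ∀ n, Integrable (V n) μ) (hW : ∀ n, Measurable (W n))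
    (hWint : ∀ n, Integrable (W n) ν)
    (hG : ∀ x (c : ℝ), (c : EReal) < ((G x : ℝ≥0∞) : EReal) → ∃ n, c < V n x)
    (hH : ∀ x (c : ℝ), (c : EReal) < ((H x : ℝ≥0∞) : EReal) → ∃ n, c < W n x)
    (ha : (a : EReal) < ((∫⁻ x, G x ∂μ + ∫⁻ x, H x ∂ν : ℝ≥0∞) : EReal)) :
    ∃ φ : SimpleFunc X ℕ, a < ∫ x, V (φ x) x ∂μ + ∫ x, W (φ x) x ∂ν := by
  classical
  obtain ⟨N, hN, hμN, hνN⟩ := hμν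
  have hμ : ∀ᵐ x ∂μ, x ∉ N := measure_eq_zero_iff_ae_notMem.1 hμN
  have hν : ∀ᵐ x ∂ν, x ∈ N := by simpa using measure_eq_zero_iff_ae_notMem.1 hνN
  let U : ℕ → X → ℝ := fun n => N.piecewise (W n) (V n)
  have hUmeas : ∀ n, Measurable (U n) := fun n => (hW n).piecewise hN (hV n)
  have hUV : ∀ n, ∀ᵐ x ∂μ, V n x = U n x := fun n =>
    hμ.mono fun x hx => (piecewise_eq_of_notMem _ _ _ hx).symm
  have hUW : ∀ n, ∀ᵐ x ∂ν, W n x = U n x := fun n =>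
    hν.mono fun x hx => (piecewise_eq_of_mem _ _ _ hx).symm
  have hUint : ∀ n, Integrable (U n) (μ + ν) := fun n =>
    ((hVint n).congr (hUV n)).add_measure ((hWint n).congr (hUW n))
  have hU : ∀ x (c : ℝ), (c : EReal) < ((N.piecewise H G x : ℝ≥0∞) : EReal) →
      ∃ n, c < U n x := by
    intro x c
    by_cases hx : x ∈ N
    · simpa only [U, piecewise_eq_of_mem _ _ _ hx] using hH x c
    · simpa only [U, piecewise_eq_of_notMem _ _ _ hx] using hG x c
  have hsum : ∫⁻ x, G x ∂μ + ∫⁻ x, H x ∂ν = ∫⁻ x, N.piecewise H G x ∂(μ + ν) := by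
    rw [lintegral_add_measure]
    congr 1
    · exact lintegral_congr_ae (hμ.mono fun x hx => (piecewise_eq_of_notMem _ _ _ hx).symm)
    · exact lintegral_congr_ae (hν.mono fun x hx => (piecewise_eq_of_mem _ _ _ hx).symm)
  obtain ⟨φ, hφint, hφ⟩ := exists_simpleFunc_lt_integral hUmeas hUint hU (hsum ▸ ha)
  refine ⟨φ, hφ.trans_eq ?_⟩
  rw [integral_add_measure hφint.left_of_add_measure hφint.right_of_add_measure]
  congr 1
  · exact integral_congr_ae (hμ.mono fun x hx => piecewise_eq_of_notMem _ _ _ hx)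
  · exact integral_congr_ae (hν.mono fun x hx => piecewise_eq_of_mem _ _ _ hx)

end MonotoneApproximation

theorem exists_seq_boundedContinuous_tendsto_ae {X : Type*} [TopologicalSpace X] [NormalSpace X]
    [MeasurableSpace X] [BorelSpace X] (ν : Measure X) [IsFiniteMeasure ν] [ν.WeaklyRegular]
    {φ : X → ℝ} (hφ : Measurable φ) {A b : ℝ} (hAb : A ≤ b) (hφm : ∀ x, φ x ∈ Icc A b) :
    ∃ h : ℕ → X →ᵇ ℝ, (∀ n x, h n x ∈ Icc A b) ∧
      ∀ᵐ x ∂ν, Tendsto (fun n => h n x) atTop (𝓝 (φ x)) := by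
  have hLp : MemLp φ 1 ν := memLp_of_bounded (ae_of_all ν hφm) hφ.aestronglyMeasurable 1
  have approx : ∀ n : ℕ, ∃ g : X →ᵇ ℝ, eLpNorm (φ - ⇑g) 1 ν ≤ (n + 1 : ℝ≥0∞)⁻¹ ∧
      MemLp (⇑g) 1 ν := fun n =>
    hLp.exists_boundedContinuous_eLpNorm_sub_le ENNReal.one_ne_top (by simp)
  choose g hg hgLp using approx
  have hmeas : TendstoInMeasure ν (fun n => ⇑(g n)) atTop φ := by
    refine tendstoInMeasure_of_tendsto_eLpNorm one_ne_zero (fun n => (hgLp n).1) hLp.1 ?_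
    have hinv : Tendsto (fun n : ℕ => (n + 1 : ℝ≥0∞)⁻¹) atTop (𝓝 0) := by
      simpa using (tendsto_add_atTop_iff_nat 1).2 ENNReal.tendsto_inv_nat_nhds_zero
    exact tendsto_of_tendsto_of_tendsto_of_le_of_le tendsto_const_nhds hinv (fun _ => zero_le)
      fun n => (eLpNorm_sub_comm _ _ _ _).trans_le (hg n)
  obtain ⟨ns, -, hns⟩ := hmeas.exists_seq_tendsto_ae
  let clamp : ℝ → ℝ := fun t => max A (min b t)
  have hclamp : Continuous clamp := by fun_prop
  refine ⟨fun n => .const X A ⊔ (.const X b ⊓ g (ns n)), fun n x =>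
    ⟨le_max_left _ _, max_le hAb (min_le_left _ _)⟩, ?_⟩
  filter_upwards [hns] with x hx
  have hfix : clamp (φ x) = φ x := by
    rw [show clamp (φ x) = max A (min b (φ x)) from rfl, min_eq_right (hφm x).2,
      max_eq_right (hφm x).1]
  exact hfix ▸ (hclamp.tendsto (φ x)).comp hx

namespace EntropyFn

variable {F : EntropyFn}

section Potentials

variable {X : Type*} [TopologicalSpace X]

variable (F X) in
/-- The admissible dual potentials: bounded continuous `φ` with `sup φ < F(0)`. -/
def potentials : Set (X →ᵇ ℝ) := {φ | ∃ b ∈ F.dualDom, ∀ x, φ x ≤ b}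

variable {φ : X →ᵇ ℝ}

theorem apply_mem_dualDom (hφ : φ ∈ F.potentials X) (x : X) : φ x ∈ F.dualDom :=
  let ⟨_, hb, hle⟩ := hφ
  F.mem_dualDom_of_le (hle x) hb

theorem exists_norm_revConjReal_le (hφ : φ ∈ F.potentials X) :
    ∃ M, ∀ x, ‖F.revConjReal (φ x)‖ ≤ M :=
  let ⟨_, hb, hle⟩ := hφ
  ⟨_, fun x => F.abs_revConjReal_le hb ⟨neg_le_of_abs_le (φ.norm_coe_le_norm x), hle x⟩⟩

/-- The bounded continuous function `R* ∘ φ` attached to an admissible potential `φ`. -/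
def revConjComp (hφ : φ ∈ F.potentials X) : X →ᵇ ℝ :=
  .ofNormedAddCommGroup (fun x => F.revConjReal (φ x))
    (F.continuousOn_revConjReal.comp_continuous φ.continuous (apply_mem_dualDom hφ)) _
    (exists_norm_revConjReal_le hφ).choose_spec

@[simp]
theorem revConjComp_apply (hφ : φ ∈ F.potentials X) (x : X) :
    revConjComp hφ x = F.revConjReal (φ x) := rfl

end Potentials

section Entropy

variable {X : Type*} [MeasurableSpace X] {γ μ : Measure X}

theorem entF_of_absolutelyContinuous (h : γ ≪ μ) :
    entF F γ μ = ∫⁻ x, F.F ((γ.rnDeriv μ x).toReal) ∂μ := by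
  simp [entF, Measure.singularPart_eq_zero_of_ac h]

theorem Superlinear.absolutelyContinuous [SFinite γ] [SigmaFinite μ] (hF : F.Superlinear)
    (h : entF F γ μ ≠ ∞) : γ ≪ μ := by
  rw [← Measure.singularPart_eq_zero]
  by_contra hne
  refine h ?_
  rw [entF, show F.recC = ∞ from hF, ENNReal.top_mul (by simpa using hne), add_top]

variable [IsFiniteMeasure γ] [IsFiniteMeasure μ]

theorem Superlinear.integral_sub_integral_revConjComp_le [TopologicalSpace X]
    [OpensMeasurableSpace X] (hF : F.Superlinear) {φ : X →ᵇ ℝ} (hφ : φ ∈ F.potentials X) :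
    ((∫ x, φ x ∂μ - ∫ x, revConjComp hφ x ∂γ : ℝ) : EReal) ≤ ((entF F γ μ : ℝ≥0∞) : EReal) := by
  by_cases htop : entF F γ μ = ∞
  · exact htop ▸ le_top
  have hac := hF.absolutelyContinuous htop
  have hint := (integrable_rnDeriv_smul_iff hac).2 ((revConjComp hφ).integrable γ)
  rw [entF_of_absolutelyContinuous hac, ← integral_rnDeriv_smul hac,
    ← integral_sub (φ.integrable μ) hint]
  refine (coe_integral_le_coe_lintegral ((φ.integrable μ).sub hint)).trans ?_
  exact EReal.coe_ennreal_le_coe_ennreal_iff.2 (lintegral_mono fun x =>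
    F.ofReal_sub_mul_revConjReal_le (apply_mem_dualDom hφ x) ENNReal.toReal_nonneg)

end Entropy

theorem Superlinear.exists_seq_mem_dualDom (hF : F.Superlinear) :
    ∃ ψ : ℕ → ℝ, (∀ n, ψ n ∈ F.dualDom) ∧
      (∀ f c : ℝ, 0 ≤ f → (c : EReal) < ((F.F f : ℝ≥0∞) : EReal) →
        ∃ n, c < ψ n - f * F.revConjReal (ψ n)) ∧
      ∀ M, ∃ n, F.revConjReal (ψ n) ≤ M := by
  let S := {q : ℚ // (q : ℝ) ∈ F.dualDom}
  have : Nonempty S := ⟨-1, F.mem_dualDom_of_neg (by norm_num)⟩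
  obtain ⟨e, he⟩ := exists_surjective_nat S
  refine ⟨fun n => e n, fun n => (e n).2, fun f c hf hc => ?_, fun M => ?_⟩
  · obtain ⟨q, hq, hlt⟩ := F.exists_rat_mem_dualDom_lt hf hc
    obtain ⟨n, hn⟩ := he ⟨q, hq⟩
    exact ⟨n, by simpa only [hn] using hlt⟩
  · obtain ⟨k, hk, hkM⟩ := hF.exists_neg_revConjReal_le M
    obtain ⟨q, hqk⟩ := exists_rat_lt k
    have hq := F.mem_dualDom_of_neg (hqk.trans hk)
    obtain ⟨n, hn⟩ := he ⟨q, hq⟩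
    refine ⟨n, ?_⟩
    simpa only [hn] using
      (F.monotoneOn_revConjReal hq (F.mem_dualDom_of_neg hk) hqk.le).trans hkM

variable {X : Type*} [MeasurableSpace X] {γ μ : Measure X} [IsFiniteMeasure γ] [IsFiniteMeasure μ]

theorem integral_eq_integral_singularPart_add {u : X → ℝ} (hu : Integrable u γ) :
    ∫ x, u x ∂γ = ∫ x, u x ∂(γ.singularPart μ) + ∫ x, (γ.rnDeriv μ x).toReal * u x ∂μ := by
  have hdec := γ.haveLebesgueDecomposition_add μ
  have hadd : Integrable u (γ.singularPart μ + μ.withDensity (γ.rnDeriv μ)) := hdec ▸ hu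
  conv_lhs => rw [hdec]
  rw [integral_add_measure hadd.left_of_add_measure hadd.right_of_add_measure,
    integral_withDensity_eq_integral_toReal_smul (γ.measurable_rnDeriv μ) (γ.rnDeriv_lt_top μ)]
  rfl

theorem Superlinear.exists_simpleFunc_lt_of_lt_entF (hF : F.Superlinear) {a : ℝ}
    (ha : (a : EReal) < ((entF F γ μ : ℝ≥0∞) : EReal)) :
    ∃ φ : SimpleFunc X ℝ, (∀ x, φ x ∈ F.dualDom) ∧
      a < ∫ x, φ x ∂μ - ∫ x, F.revConjReal (φ x) ∂γ := by
  obtain ⟨ψ, hψ, hsup, hneg⟩ := hF.exists_seq_mem_dualDom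
  set σ := γ.singularPart μ
  set f : X → ℝ := fun x => (γ.rnDeriv μ x).toReal
  have hfint : Integrable f μ := Measure.integrable_toReal_rnDeriv
  have hent : entF F γ μ = ∫⁻ x, F.F (f x) ∂μ + ∫⁻ _, ∞ ∂σ := by
    rw [lintegral_const, entF, show F.recC = ∞ from hF]
  obtain ⟨φ, hφ⟩ := exists_simpleFunc_lt_integral_add_integral
    (μ := μ) (ν := σ) (V := fun n x => ψ n - f x * F.revConjReal (ψ n))
    (W := fun n _ => -F.revConjReal (ψ n)) (Measure.mutuallySingular_singularPart γ μ).symm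
    (fun n => measurable_const.sub ((γ.measurable_rnDeriv μ).ennreal_toReal.mul_const _))
    (fun n => (integrable_const _).sub (hfint.mul_const _)) (fun _ => measurable_const)
    (fun _ => integrable_const _) (fun x c hc => hsup (f x) c ENNReal.toReal_nonneg hc)
    (fun _ c _ => (hneg (-c - 1)).imp fun n hn => by linarith) (hent ▸ ha)
  refine ⟨φ.map ψ, fun x => hψ (φ x), hφ.trans_eq ?_⟩
  have hψφ : Integrable (fun x => ψ (φ x)) μ := (φ.map ψ).integrable_of_isFiniteMeasure
  let ρ : SimpleFunc X ℝ := φ.map fun n => F.revConjReal (ψ n)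
  have hργ : Integrable (fun x => F.revConjReal (ψ (φ x))) γ := ρ.integrable_of_isFiniteMeasure
  have hfρ : Integrable (fun x => f x * F.revConjReal (ψ (φ x))) μ :=
    let ⟨_, hB⟩ := ρ.exists_forall_norm_le
    hfint.mul_bdd ρ.aestronglyMeasurable (ae_of_all _ hB)
  simp only [SimpleFunc.map_apply]
  rw [integral_sub hψφ hfρ, integral_neg, integral_eq_integral_singularPart_add (μ := μ) hργ]
  ring

theorem exists_forall_mem_Icc_dualDom (φ : SimpleFunc X ℝ) (hφ : ∀ x, φ x ∈ F.dualDom) :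
    ∃ A b, A ≤ b ∧ b ∈ F.dualDom ∧ ∀ x, φ x ∈ Icc A b := by
  -- The extra value `-1` keeps the range nonempty when `X` is empty.
  set S := insert (-1) φ.range
  have hS : S.Nonempty := Finset.insert_nonempty _ _
  have hdom : ∀ y ∈ S, y ∈ F.dualDom := by
    intro y hy
    rcases Finset.mem_insert.1 hy with rfl | hy
    · exact F.mem_dualDom_of_neg (by norm_num)
    · obtain ⟨x, rfl⟩ := SimpleFunc.mem_range.1 hy
      exact hφ x
  have hmem : ∀ x, φ x ∈ S := fun x => Finset.mem_insert_of_mem (φ.mem_range_self x)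
  exact ⟨S.min' hS, S.max' hS, S.min'_le _ (S.max'_mem hS), hdom _ (S.max'_mem hS),
    fun x => ⟨S.min'_le _ (hmem x), S.le_max' _ (hmem x)⟩⟩

theorem Superlinear.exists_potential_lt_of_lt_entF [TopologicalSpace X]
    [TopologicalSpace.PseudoMetrizableSpace X]
    [BorelSpace X] (hF : F.Superlinear) {a : ℝ} (ha : (a : EReal) < ((entF F γ μ : ℝ≥0∞) : EReal)) :
    ∃ φ : X →ᵇ ℝ, ∃ hφ : φ ∈ F.potentials X,
      a < ∫ x, φ x ∂μ - ∫ x, revConjComp hφ x ∂γ := by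
  obtain ⟨φ, hφ, hlt⟩ := hF.exists_simpleFunc_lt_of_lt_entF ha
  obtain ⟨A, b, hAb, hb, hφm⟩ := exists_forall_mem_Icc_dualDom φ hφ
  obtain ⟨h, hm, hlim⟩ :=
    exists_seq_boundedContinuous_tendsto_ae (μ + γ) φ.measurable hAb hφm
  have hh : ∀ n, h n ∈ F.potentials X := fun n => ⟨b, hb, fun x => (hm n x).2⟩
  rw [ae_add_measure_iff] at hlim
  have hμ : Tendsto (fun n => ∫ x, h n x ∂μ) atTop (𝓝 (∫ x, φ x ∂μ)) :=
    tendsto_integral_of_dominated_convergence (fun _ => max |A| |b|)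
      (fun n => (h n).continuous.aestronglyMeasurable) (integrable_const _)
      (fun n => ae_of_all _ fun x => abs_le_max_abs_abs (hm n x).1 (hm n x).2) hlim.1
  have hγ : Tendsto (fun n => ∫ x, revConjComp (hh n) x ∂γ) atTop
      (𝓝 (∫ x, F.revConjReal (φ x) ∂γ)) :=
    tendsto_integral_of_dominated_convergence (fun _ => |F.revConjReal A| + |F.revConjReal b|)
      (fun n => (revConjComp (hh n)).continuous.aestronglyMeasurable) (integrable_const _)
      (fun n => ae_of_all _ fun x => F.abs_revConjReal_le hb (hm n x))
      (hlim.2.mono fun x hx => ((F.continuousOn_revConjReal.continuousAt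
        (F.isOpen_dualDom.mem_nhds (hφ x))).tendsto.comp hx))
  obtain ⟨n, hn⟩ := ((hμ.sub hγ).eventually_const_lt hlt).exists
  exact ⟨h n, hh n, hn⟩

end EntropyFn

theorem lowerSemicontinuous_coe_ennreal_ereal {Y : Type*} [TopologicalSpace Y] {c : Y → ℝ≥0∞}
    (hc : LowerSemicontinuous c) : LowerSemicontinuous fun y => (c y : EReal) :=
  continuous_coe_ennreal_ereal.comp_lowerSemicontinuous hc EReal.coe_ennreal_strictMono.monotone

section StrictMinorants

variable {Y : Type*} [TopologicalSpace Y] {c : Y → ℝ≥0∞}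

variable (c) in
/-- The continuous functions lying strictly below the extended cost `c`. -/
def strictMinorants : Set C(Y, ℝ) := {f | ∀ y, (f y : EReal) < (c y : EReal)}

theorem mem_strictMinorants_of_le {f g : C(Y, ℝ)} (hg : g ∈ strictMinorants c) (hfg : f ≤ g) :
    f ∈ strictMinorants c :=
  fun y => (EReal.coe_le_coe_iff.2 (hfg y)).trans_lt (hg y)

theorem isOpen_strictMinorants [CompactSpace Y] (hc : LowerSemicontinuous c) :
    IsOpen (strictMinorants c) := by
  have hclosed : IsClosed {p : C(Y, ℝ) × Y | (c p.2 : EReal) ≤ (p.1 p.2 : EReal)} :=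
    (lowerSemicontinuous_coe_ennreal_ereal hc).isClosed_epigraph.preimage
      (f := fun p : C(Y, ℝ) × Y => (p.2, (p.1 p.2 : EReal)))
      (continuous_snd.prodMk (continuous_coe_real_ereal.comp (by fun_prop)))
  convert! (isClosedMap_fst_of_compactSpace _ hclosed).isOpen_compl using 1
  ext f
  simp [strictMinorants]

theorem convex_strictMinorants : Convex ℝ (strictMinorants c) := by
  intro f hf g hg s t hs ht hst y
  have hmax : ((max (f y) (g y) : ℝ) : EReal) < (c y : EReal) := by
    rcases max_choice (f y) (g y) with h | h <;> rw [h]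
    exacts [hf y, hg y]
  exact (EReal.coe_le_coe_iff.2 (Convex.combo_le_max _ _ hs ht hst)).trans_lt hmax

theorem exists_strictMinorant_apply_eq [T4Space Y] (hc : LowerSemicontinuous c) {y : Y} {r : ℝ}
    (hr : (r : EReal) < (c y : EReal)) : ∃ f ∈ strictMinorants c, f y = r := by
  rcases lt_or_ge r 0 with hneg | hpos
  · exact ⟨.const Y r, fun z => (EReal.coe_neg'.2 hneg).trans_le (EReal.coe_ennreal_nonneg _), rfl⟩
  have hopen : IsOpen {z | (r : EReal) < (c z : EReal)} :=
    (lowerSemicontinuous_coe_ennreal_ereal hc).isOpen_preimage r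
  obtain ⟨u, hu0, hu1, hu⟩ := exists_continuous_zero_one_of_isClosed hopen.isClosed_compl
    isClosed_singleton (disjoint_singleton_right.2 (not_not_intro hr))
  refine ⟨u * .const Y (r + 1) - 1, fun z => ?_, ?_⟩
  · by_cases hz : (r : EReal) < (c z : EReal)
    · refine lt_of_le_of_lt (EReal.coe_le_coe_iff.2 ?_) hz
      have := mul_le_of_le_one_left (add_nonneg hpos zero_le_one) (hu z).2
      simpa using this
    · have : u z = 0 := hu0 hz
      refine lt_of_lt_of_le (b := 0) ?_ (EReal.coe_ennreal_nonneg _)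
      simp [this]
  · have : u y = 1 := hu1 rfl
    simp [this]

theorem exists_strictMinorant_lt_integral [CompactSpace Y] [T2Space Y] [SecondCountableTopology Y]
    [MeasurableSpace Y] [BorelSpace Y] (hc : LowerSemicontinuous c) {Γ : Measure Y}
    [IsFiniteMeasure Γ] {a : ℝ} (ha : (a : EReal) < ((∫⁻ y, c y ∂Γ : ℝ≥0∞) : EReal)) :
    ∃ f ∈ strictMinorants c, a < ∫ y, f y ∂Γ := by
  have hne : Nonempty (strictMinorants c) :=
    ⟨⟨.const Y (-1), fun y =>
      (EReal.coe_neg'.2 neg_one_lt_zero).trans_le (EReal.coe_ennreal_nonneg _)⟩⟩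
  let f : ℕ → C(Y, ℝ) := fun n => TopologicalSpace.denseSeq (strictMinorants c) n
  have hsup : ∀ n, partialSups f n ∈ strictMinorants c := by
    intro n
    induction n with
    | zero => exact partialSups_zero f ▸ Subtype.coe_prop _
    | succ n ih =>
      intro y
      rw [partialSups_add_one, ContinuousMap.sup_apply]
      rcases max_choice (partialSups f n y) (f (n + 1) y) with h | h <;> rw [h]
      exacts [ih y, Subtype.coe_prop (TopologicalSpace.denseSeq (strictMinorants c) (n + 1)) y]
  have happrox : ∀ y (r : ℝ), (r : EReal) < (c y : EReal) → ∃ n, r < partialSups f n y := by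
    intro y r hr
    obtain ⟨s, hrs, hs⟩ := EReal.lt_iff_exists_real_btwn.1 hr
    obtain ⟨g, hg, hgy⟩ := exists_strictMinorant_apply_eq hc hs
    have hopen : IsOpen {f : strictMinorants c | r < f.1 y} :=
      isOpen_lt continuous_const ((continuous_eval_const y).comp continuous_subtype_val)
    obtain ⟨n, hn⟩ := (TopologicalSpace.denseRange_denseSeq (strictMinorants c)).exists_mem_open
      hopen ⟨⟨g, hg⟩, by simpa [hgy] using hrs⟩
    exact ⟨n, hn.trans_le (le_partialSups f n y)⟩
  obtain ⟨n, hn⟩ := exists_lt_integral_of_lt_lintegral (h := fun n => ⇑(partialSups f n))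
    (fun n => (partialSups f n).continuous.measurable)
    (fun n => (BoundedContinuousFunction.mkOfCompact (partialSups f n)).integrable Γ)
    (fun i j hij => partialSups_monotone f hij) happrox ha
  exact ⟨_, hsup n, hn⟩

end StrictMinorants

theorem exists_finiteMeasure_integral_eq {Y : Type*} [TopologicalSpace Y] [CompactSpace Y]
    [T2Space Y] [MeasurableSpace Y] [BorelSpace Y] (Λ : C(Y, ℝ) →ₗ[ℝ] ℝ)
    (hΛ : ∀ f, 0 ≤ f → 0 ≤ Λ f) :
    ∃ Γ : Measure Y, IsFiniteMeasure Γ ∧ ∀ f : C(Y, ℝ), ∫ y, f y ∂Γ = Λ f := by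
  let Λ' : CompactlySupportedContinuousMap Y ℝ →ₚ[ℝ] ℝ := .mk₀
    { toFun := fun f => Λ f
      map_add' := fun f g => Λ.map_add f g
      map_smul' := fun r f => Λ.map_smul r f } fun f hf => hΛ f hf
  exact ⟨RealRMK.rieszMeasure Λ', inferInstance, fun f =>
    RealRMK.integral_rieszMeasure Λ' (CompactlySupportedContinuousMap.continuousMapEquiv f)⟩

theorem nonpos_of_forall_mul_le {y u : ℝ} (h : ∀ t, 0 ≤ t → t * y ≤ u) : y ≤ 0 := by
  by_contra! hy
  have hlt : max 0 (u / y) < max 0 (u / y) + 1 := lt_add_one _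
  have hle := (le_div_iff₀ hy).2 (h _ ((le_max_left 0 (u / y)).trans hlt.le))
  exact (hle.trans (le_max_right _ _)).not_gt hlt

-- The nonvertical hyperplane is a Lagrange multiplier for maximising `q.2` over the `q ∈ T` with
-- `q.1 ∈ S`; the point of `T` over `S` is Slater's condition.
theorem exists_continuousLinearMap_add_le {E : Type*} [TopologicalSpace E] [AddCommGroup E]
    [Module ℝ E] [IsTopologicalAddGroup E] [ContinuousSMul ℝ E] {S : Set E} (hS : Convex ℝ S)
    (hSopen : IsOpen S) {T : Set (E × ℝ)} (hT : Convex ℝ T) (hslater : ∃ q ∈ T, q.1 ∈ S) {v : ℝ}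
    (hv : ∀ q ∈ T, q.1 ∈ S → q.2 ≤ v) :
    ∃ Λ : E →L[ℝ] ℝ, ∀ q ∈ T, ∀ f ∈ S, Λ f + q.2 ≤ v + Λ q.1 := by
  have hdisj : Disjoint (S ×ˢ Ioi v) T :=
    Set.disjoint_left.2 fun q hq hqT => (hv q hqT hq.1).not_gt hq.2
  obtain ⟨L, u, hL, hLT⟩ := geometric_hahn_banach_open (hS.prod (convex_Ioi v))
    (hSopen.prod isOpen_Ioi) hT hdisj
  let Λ : E →L[ℝ] ℝ := L.comp (.inl ℝ E ℝ)
  let s : ℝ := L (0, 1)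
  have hLq : ∀ q, L q = Λ q.1 + q.2 * s := fun q =>
    calc L q = L ((q.1, 0) + q.2 • (0, 1)) := by congr 1; ext <;> simp
      _ = Λ q.1 + q.2 * s := by rw [map_add, map_smul]; rfl
  have hlt : ∀ f ∈ S, ∀ t > 0, Λ f + (v + t) * s < u := fun f hf t ht =>
    hLq (f, v + t) ▸ hL _ ⟨hf, lt_add_of_pos_right v ht⟩
  have hle : ∀ q ∈ T, u ≤ Λ q.1 + q.2 * s := fun q hq => hLq q ▸ hLT q hq
  obtain ⟨q₀, hq₀T, hq₀⟩ := hslater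
  have hs : s < 0 := by
    refine neg_of_mul_neg_right ?_ (add_pos_of_nonneg_of_pos (sub_nonneg.2 (hv q₀ hq₀T hq₀))
      one_pos).le
    linarith [hlt q₀.1 hq₀ 1 one_pos, hle q₀ hq₀T]
  refine ⟨(-s)⁻¹ • Λ, fun q hq f hf => ?_⟩
  have hlimit : Λ f + v * s ≤ u :=
    le_of_forall_pos_lt_add fun ε hε => by
      have := hlt f hf (ε / -s) (div_pos hε (neg_pos.2 hs))
      have := div_mul_cancel₀ ε (neg_ne_zero.2 hs.ne)
      linarith
  have hdiv := mul_le_mul_of_nonneg_left (hlimit.trans (hle q hq)) (inv_nonneg.2 (neg_pos.2 hs).le)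
  have hcancel : (-s)⁻¹ * s = -1 := by rw [inv_neg, neg_mul, inv_mul_cancel₀ hs.ne]
  simp only [smul_apply, smul_eq_mul]
  linear_combination hdiv + (q.2 - v) * hcancel

theorem exists_finiteMeasure_lintegral_le {Y : Type*} [TopologicalSpace Y] [CompactSpace Y]
    [T2Space Y] [SecondCountableTopology Y] [MeasurableSpace Y] [BorelSpace Y] {c : Y → ℝ≥0∞}
    (hc : LowerSemicontinuous c) {T : Set (C(Y, ℝ) × ℝ)} (hT : Convex ℝ T)
    (hslater : ∃ q ∈ T, q.1 ∈ strictMinorants c) {v : ℝ}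
    (hv : ∀ q ∈ T, q.1 ∈ strictMinorants c → q.2 ≤ v) :
    ∃ Γ : Measure Y, IsFiniteMeasure Γ ∧ ∀ q ∈ T,
      ((∫⁻ y, c y ∂Γ : ℝ≥0∞) : EReal) ≤ ((v - q.2 + ∫ y, q.1 y ∂Γ : ℝ) : EReal) := by
  obtain ⟨Λ, hΛ⟩ := exists_continuousLinearMap_add_le convex_strictMinorants
    (isOpen_strictMinorants hc) hT hslater hv
  obtain ⟨q₀, hq₀T, hq₀⟩ := hslater
  have hpos : ∀ f : C(Y, ℝ), 0 ≤ f → 0 ≤ Λ f := fun f hf => by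
    refine neg_nonpos.1 (nonpos_of_forall_mul_le (u := v - q₀.2) fun t ht => ?_)
    have := hΛ q₀ hq₀T (q₀.1 - t • f)
      (mem_strictMinorants_of_le hq₀ (sub_le_self _ (smul_nonneg ht hf)))
    simp only [map_sub, map_smul, smul_eq_mul] at this
    linarith
  obtain ⟨Γ, hΓ, hint⟩ := exists_finiteMeasure_integral_eq Λ.toLinearMap hpos
  refine ⟨Γ, hΓ, fun q hq => EReal.ge_of_forall_gt_iff_ge.1 fun a ha => ?_⟩
  obtain ⟨f, hf, haf⟩ := exists_strictMinorant_lt_integral hc ha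
  have hle := hΛ q hq f hf
  rw [← Λ.coe_coe, ← hint, ← hint] at hle
  exact EReal.coe_le_coe_iff.2 (by linarith)

theorem standardBorelSpace_of_measurableEmbedding {X Z : Type*} [MeasurableSpace X]
    [MeasurableSpace Z] [StandardBorelSpace Z] {f : X → Z} (hf : MeasurableEmbedding f) :
    StandardBorelSpace X := by
  have := hf.measurableSet_range.standardBorel
  let e : X ≃ᵐ range f := hf.equivRange
  let _ := upgradeStandardBorel (range f)
  let _ : TopologicalSpace X := .induced e inferInstance
  have : PolishSpace X := e.toEquiv.polishSpace_induced
  have : BorelSpace X := ⟨by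
    rw [borel_comap, ← BorelSpace.measurable_eq]
    exact e.measurableEmbedding.comap_eq.symm⟩
  infer_instance

section ProbabilityMeasureMap

variable {X Z : Type*} [MeasurableSpace X] [MeasurableSpace Z] {f : X → Z}

variable (X) in
/-- The tautological Markov kernel, sending a probability measure to itself. -/
def tautologicalKernel : ProbabilityTheory.Kernel (ProbabilityMeasure X) X :=
  ⟨fun p => (p : Measure X), measurable_subtype_coe⟩

instance : ProbabilityTheory.IsMarkovKernel (tautologicalKernel X) :=
  ⟨fun p => p.2⟩

theorem measurable_probabilityMeasure_apply {s : Set X} (hs : MeasurableSet s) :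
    Measurable fun p : ProbabilityMeasure X => (p : Measure X) s :=
  (tautologicalKernel X).measurable_coe hs

theorem measurable_probabilityMeasure_map (hf : Measurable f) :
    Measurable fun p : ProbabilityMeasure X => p.map hf.aemeasurable :=
  ((Measure.measurable_map f hf).comp measurable_subtype_coe).subtype_mk

theorem injective_probabilityMeasure_map (hf : MeasurableEmbedding f) :
    Function.Injective fun p : ProbabilityMeasure X => p.map hf.measurable.aemeasurable := by
  intro p q hpq
  have hmap : (p : Measure X).map f = (q : Measure X).map f := congrArg Subtype.val hpq
  exact Subtype.ext ((hf.comap_map p.1).symm.trans (hmap ▸ hf.comap_map q.1))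

theorem map_compl_range (hf : MeasurableEmbedding f) (μ : Measure X) :
    μ.map f (range f)ᶜ = 0 := by
  rw [hf.map_apply, preimage_compl, preimage_range, compl_univ, measure_empty]

theorem range_probabilityMeasure_map (hf : MeasurableEmbedding f) :
    (range fun p : ProbabilityMeasure X => p.map hf.measurable.aemeasurable)
      = {q : ProbabilityMeasure Z | (q : Measure Z) (range f)ᶜ = 0} := by
  ext q
  constructor
  · rintro ⟨p, rfl⟩
    exact map_compl_range hf p
  · intro hq
    have hmap : ((q : Measure Z).comap f).map f = q := by
      rw [hf.map_comap]
      exact Measure.restrict_eq_self_of_ae_mem (mem_ae_iff.2 hq)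
    have hprob : IsProbabilityMeasure ((q : Measure Z).comap f) :=
      ⟨by rw [← preimage_univ (f := f), ← hf.map_apply, hmap, measure_univ]⟩
    exact ⟨⟨_, hprob⟩, Subtype.ext hmap⟩

theorem measurableEmbedding_probabilityMeasure_map (hf : MeasurableEmbedding f) :
    MeasurableEmbedding fun p : ProbabilityMeasure X => p.map hf.measurable.aemeasurable := by
  have hmeas := measurable_probabilityMeasure_map hf.measurable
  refine MeasurableEmbedding.iff_comap_eq.2
    ⟨injective_probabilityMeasure_map hf, le_antisymm hmeas.comap_le ?_, ?_⟩
  · let m : MeasurableSpace (ProbabilityMeasure X) :=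
      .comap (fun p => p.map hf.measurable.aemeasurable) inferInstance
    have hcoe : Measurable[m] (fun p : ProbabilityMeasure X => (p : Measure X)) := by
      refine Measure.measurable_of_measurable_coe _ fun s hs => ?_
      have hmap : ∀ p : ProbabilityMeasure X, (p : Measure X) s = (p : Measure X).map f (f '' s) :=
        fun p => by rw [hf.map_apply, preimage_image_eq _ hf.injective]
      exact funext hmap ▸ (measurable_probabilityMeasure_apply
        (hf.measurableSet_image.2 hs)).comp (comap_measurable _)
    exact hcoe.comap_le
  · rw [range_probabilityMeasure_map hf]
    exact measurable_probabilityMeasure_apply hf.measurableSet_range.compl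
      (measurableSet_singleton 0)

end ProbabilityMeasureMap

theorem isInducing_probabilityMeasure_map {X Z : Type*} [TopologicalSpace X] [MeasurableSpace X]
    [BorelSpace X] [TopologicalSpace Z] [MeasurableSpace Z] [BorelSpace Z] [HasOuterApproxClosed Z]
    [FirstCountableTopology (ProbabilityMeasure Z)] {f : X → Z} (hf : IsInducing f) :
    IsInducing fun p : ProbabilityMeasure X => p.map hf.continuous.measurable.aemeasurable := by
  set F := fun p : ProbabilityMeasure X => p.map hf.continuous.measurable.aemeasurable
  refine isInducing_iff_nhds.2 fun p => le_antisymm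
    ((ProbabilityMeasure.continuous_map hf.continuous).tendsto p).le_comap ?_
  change Tendsto id (comap F (𝓝 (F p))) (𝓝 p)
  refine tendsto_of_forall_isOpen_le_liminf' fun G hG => ?_
  obtain ⟨V, hV, rfl⟩ := hf.isOpen_iff.1 hG
  have happly : ∀ q : ProbabilityMeasure X, (q : Measure X) (f ⁻¹' V) = (F q : Measure Z) V :=
    fun q => (Measure.map_apply hf.continuous.measurable hV.measurableSet).symm
  simp only [id, happly]
  exact ProbabilityMeasure.le_liminf_measure_open_of_tendsto tendsto_comap hV

section GiryBorel

variable {Z : Type*} [TopologicalSpace Z] [MeasurableSpace Z] [BorelSpace Z]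

theorem lowerSemicontinuous_probabilityMeasure_apply [HasOuterApproxClosed Z] {G : Set Z}
    (hG : IsOpen G) : LowerSemicontinuous fun p : ProbabilityMeasure Z => (p : Measure Z) G :=
  lowerSemicontinuous_iff_le_liminf.2 fun _ =>
    ProbabilityMeasure.le_liminf_measure_open_of_tendsto tendsto_id hG

theorem continuous_probabilityMeasure_integral (f : Z →ᵇ ℝ) :
    Continuous fun p : ProbabilityMeasure Z => ∫ z, f z ∂(p : Measure Z) :=
  continuous_iff_continuousAt.2 fun _ =>
    ProbabilityMeasure.tendsto_iff_forall_integral_tendsto.1 tendsto_id f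

theorem measurable_probabilityMeasure_integral (f : Z →ᵇ ℝ) :
    Measurable fun p : ProbabilityMeasure Z => ∫ z, f z ∂(p : Measure Z) :=
  (f.continuous.stronglyMeasurable.integral_kernel (κ := tautologicalKernel Z)).measurable

theorem continuous_continuousMap_integral [CompactSpace Z] (μ : Measure Z) [IsFiniteMeasure μ] :
    Continuous fun g : C(Z, ℝ) => ∫ z, g z ∂μ := by
  refine continuous_iff_continuousAt.2 fun g => tendsto_integral_filter_of_norm_le_const
    (.of_forall fun f => f.continuous.aestronglyMeasurable) ⟨‖g‖ + 1, ?_⟩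
    (.of_forall fun z => (continuous_eval_const z).tendsto g)
  filter_upwards [continuous_norm.tendsto g |>.eventually_lt_const (lt_add_one _)] with f hf
  exact .of_forall fun z => (f.norm_coe_le_norm z).trans hf.le

theorem exists_isClosedEmbedding_probabilityMeasure [CompactSpace Z]
    [TopologicalSpace.MetrizableSpace Z] :
    ∃ f : ℕ → Z →ᵇ ℝ, IsClosedEmbedding fun (p : ProbabilityMeasure Z) (n : ℕ) =>
      ∫ z, f n z ∂(p : Measure Z) := by
  have := TopologicalSpace.metrizableSpaceMetric Z
  let f : ℕ → C(Z, ℝ) := TopologicalSpace.denseSeq _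
  refine ⟨fun n => .mkOfCompact (f n), (continuous_pi fun n =>
    continuous_probabilityMeasure_integral _).isClosedEmbedding fun p q hpq => Subtype.ext ?_⟩
  have hp := p.2
  have hq := q.2
  refine ext_of_forall_integral_eq_of_IsFiniteMeasure (μ := p.1) (ν := q.1) fun g => ?_
  exact congrFun ((TopologicalSpace.denseRange_denseSeq C(Z, ℝ)).equalizer
    (continuous_continuousMap_integral p.1) (continuous_continuousMap_integral q.1) hpq)
    g.toContinuousMap

theorem borelSpace_probabilityMeasure [CompactSpace Z] [TopologicalSpace.MetrizableSpace Z] :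
    BorelSpace (ProbabilityMeasure Z) := by
  refine ⟨le_antisymm ?_ ?_⟩
  · let m := borel (ProbabilityMeasure Z)
    have : BorelSpace (ProbabilityMeasure Z) := ⟨rfl⟩
    have hcoe : Measurable[m] fun p : ProbabilityMeasure Z => (p : Measure Z) :=
      .measure_of_isPiSystem_of_isProbabilityMeasure (BorelSpace.measurable_eq (α := Z))
        isPiSystem_isOpen fun G hG => (lowerSemicontinuous_probabilityMeasure_apply hG).measurable
    exact hcoe.comap_le
  · obtain ⟨f, hf⟩ := exists_isClosedEmbedding_probabilityMeasure (Z := Z)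
    have hmeas : Measurable fun (p : ProbabilityMeasure Z) n => ∫ z, f n z ∂(p : Measure Z) :=
      measurable_pi_lambda _ fun n => measurable_probabilityMeasure_integral (f n)
    calc borel (ProbabilityMeasure Z) = _ := congrArg (@borel _) hf.eq_induced
      _ = (borel (ℕ → ℝ)).comap _ := borel_comap
      _ ≤ _ := BorelSpace.measurable_eq (α := ℕ → ℝ) ▸ hmeas.comap_le

end GiryBorel

theorem exists_isEmbedding_compact_metrizable (X : Type*) [TopologicalSpace X] [PolishSpace X] :
    ∃ ι : X → ℕ → unitInterval, IsEmbedding ι := by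
  let _ := TopologicalSpace.upgradeIsCompletelyMetrizable X
  exact Metric.PiNatEmbed.exists_embedding_to_hilbert_cube

section LscExtension

variable {A Y : Type*} [TopologicalSpace Y]

/-- The largest lower semicontinuous extension to `Y` of a function `c` on a space `A` mapped to
`Y` by `j`; it is `∞` off the closure of the range of `j`. -/
def lscExtension (j : A → Y) (c : A → ℝ≥0∞) (y : Y) : ℝ≥0∞ := liminf c (comap j (𝓝 y))

theorem lowerSemicontinuous_lscExtension (j : A → Y) (c : A → ℝ≥0∞) :
    LowerSemicontinuous (lscExtension j c) := by
  intro y t ht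
  obtain ⟨s, hts, hs⟩ := exists_between ht
  have hev : ∀ᶠ z in 𝓝 y, ∀ a, j a = z → s < c a :=
    eventually_comap.1 (eventually_lt_of_lt_liminf hs)
  filter_upwards [hev.eventually_nhds] with z hz
  exact hts.trans_le (le_liminf_of_le (by isBoundedDefault)
    ((eventually_comap.2 hz).mono fun _ => le_of_lt))

theorem lscExtension_apply [TopologicalSpace A] {j : A → Y} (hj : IsInducing j) {c : A → ℝ≥0∞}
    (hc : LowerSemicontinuous c) (a : A) : lscExtension j c (j a) = c a := by
  rw [lscExtension, ← hj.nhds_eq_comap]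
  have hself : ∃ᶠ b in 𝓝 a, c b ≤ c a :=
    Frequently.filter_mono (frequently_pure.2 le_rfl) (pure_le_nhds a)
  exact le_antisymm (liminf_le_of_frequently_le' hself)
    (lowerSemicontinuousAt_iff_le_liminf.1 (hc a))

end LscExtension

section Barycenter

variable {X : Type*} [MeasurableSpace X]

/-- The barycenter `∫ p dm(p)` of a measure on the space of probability measures. -/
def barycenter (m : Measure (ProbabilityMeasure X)) : Measure X := m.bind (tautologicalKernel X)

instance (m : Measure (ProbabilityMeasure X)) [IsFiniteMeasure m] :
    IsFiniteMeasure (barycenter m) :=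
  inferInstanceAs (IsFiniteMeasure (m.bind (tautologicalKernel X)))

variable {m : Measure (ProbabilityMeasure X)}

theorem barycenter_apply {s : Set X} (hs : MeasurableSet s) :
    barycenter m s = ∫⁻ p, (p : Measure X) s ∂m :=
  Measure.bind_apply hs (tautologicalKernel X).aemeasurable

theorem integral_barycenter [IsFiniteMeasure m] {f : X → ℝ} (hf : Integrable f (barycenter m)) :
    ∫ x, f x ∂(barycenter m) = ∫ p, ∫ x, f x ∂(p : Measure X) ∂m := by
  rw [barycenter, ← Measure.snd_compProd, Measure.snd] at *
  rw [integral_map measurable_snd.aemeasurable hf.1]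
  exact Measure.integral_compProd (hf.comp_measurable measurable_snd)

theorem barycenter_map {Z : Type*} [MeasurableSpace Z] {f : X → Z} (hf : Measurable f) :
    barycenter (m.map fun p => p.map hf.aemeasurable) = (barycenter m).map f := by
  ext s hs
  rw [barycenter_apply hs, Measure.map_apply hf hs, barycenter_apply (hf hs),
    lintegral_map (measurable_probabilityMeasure_apply hs) (measurable_probabilityMeasure_map hf)]
  exact lintegral_congr fun p => Measure.map_apply hf hs

theorem integrable_integral_barycenter [IsFiniteMeasure m] {f : X → ℝ}
    (hf : Integrable f (barycenter m)) :
    Integrable (fun p : ProbabilityMeasure X => ∫ x, f x ∂(p : Measure X)) m := by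
  rw [barycenter, ← Measure.snd_compProd, Measure.snd] at hf
  exact (hf.comp_measurable measurable_snd).integral_compProd

theorem integral_add_integral_sub {A : Type*} [MeasurableSpace A]
    {Γ : Measure (A × ProbabilityMeasure X)} [IsFiniteMeasure Γ] {f : A → ℝ} {g : X → ℝ}
    (hf : Integrable f Γ.fst) (hg : Integrable g (barycenter Γ.snd)) (K : ℝ) :
    ∫ y, (f y.1 + ∫ x, g x ∂(y.2 : Measure X) - K) ∂Γ
      = ∫ z, f z ∂Γ.fst + ∫ x, g x ∂(barycenter Γ.snd) - K * Γ.real univ := by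
  have hG := integrable_integral_barycenter hg
  have hfΓ : Integrable (fun y => f y.1) Γ := hf.comp_measurable measurable_fst
  have hGΓ : Integrable (fun y => ∫ x, g x ∂(y.2 : Measure X)) Γ :=
    hG.comp_measurable measurable_snd
  have hfst : ∫ y, f y.1 ∂Γ = ∫ z, f z ∂Γ.fst :=
    (integral_map measurable_fst.aemeasurable hf.1).symm
  have hsnd : ∫ y, ∫ x, g x ∂(y.2 : Measure X) ∂Γ = ∫ x, g x ∂(barycenter Γ.snd) :=
    (integral_map measurable_snd.aemeasurable hG.1).symm.trans (integral_barycenter hg).symm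
  have hsub := integral_sub (hfΓ.add hGΓ) (integrable_const K)
  rw [integral_const, smul_eq_mul, mul_comm, integral_add' hfΓ hGΓ, hfst, hsnd] at hsub
  exact hsub

end Barycenter

theorem coe_ennreal_add_le_of_forall_lt {a b : ℝ≥0∞} {w : ℝ}
    (h : ∀ s t : ℝ, (s : EReal) < a → (t : EReal) < b → s + t ≤ w) : (a + b : EReal) ≤ w := by
  refine EReal.add_le_of_forall_lt fun a' ha' b' hb' => ?_
  obtain ⟨s, has, hsa⟩ := EReal.lt_iff_exists_real_btwn.1 ha'
  obtain ⟨t, hbt, htb⟩ := EReal.lt_iff_exists_real_btwn.1 hb'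
  exact (add_le_add has.le hbt.le).trans (EReal.coe_le_coe_iff.2 (h s t hsa htb))

theorem integral_boundedContinuous_combo {X : Type*} [TopologicalSpace X] [MeasurableSpace X]
    [OpensMeasurableSpace X] (μ : Measure X) [IsFiniteMeasure μ] (φ ψ : X →ᵇ ℝ) (s t : ℝ) :
    ∫ x, (s • φ + t • ψ) x ∂μ = s * ∫ x, φ x ∂μ + t * ∫ x, ψ x ∂μ := by
  rw [← integral_const_mul, ← integral_const_mul, ← integral_add
    ((φ.integrable μ).const_mul s) ((ψ.integrable μ).const_mul t)]
  rfl

namespace EntropyFn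

variable {F : EntropyFn} {X : Type*} [TopologicalSpace X]

theorem convex_potentials : Convex ℝ (F.potentials X) := by
  rintro φ ⟨b, hb, hφ⟩ ψ ⟨d, hd, hψ⟩ s t hs ht hst
  refine ⟨s * b + t * d, F.convex_dualDom hb hd hs ht hst, fun x => ?_⟩
  exact add_le_add (mul_le_mul_of_nonneg_left (hφ x) hs) (mul_le_mul_of_nonneg_left (hψ x) ht)

theorem const_mem_potentials {k : ℝ} (hk : k < 0) : .const X k ∈ F.potentials X :=
  ⟨k, F.mem_dualDom_of_neg hk, fun _ => le_rfl⟩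

theorem comp_mem_potentials {Z : Type*} [TopologicalSpace Z] {φ : Z →ᵇ ℝ}
    (hφ : φ ∈ F.potentials Z) (f : C(X, Z)) : φ.compContinuous f ∈ F.potentials X :=
  hφ.imp fun _ hb => ⟨hb.1, fun x => hb.2 (f x)⟩

theorem integrable_revConjReal [MeasurableSpace X] [OpensMeasurableSpace X] {φ : X →ᵇ ℝ}
    (hφ : φ ∈ F.potentials X) (μ : Measure X) [IsFiniteMeasure μ] :
    Integrable (fun x => F.revConjReal (φ x)) μ :=
  (revConjComp hφ).integrable μ

theorem integral_revConjReal_combo_le [MeasurableSpace X] [OpensMeasurableSpace X]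
    {φ ψ : X →ᵇ ℝ} (hφ : φ ∈ F.potentials X) (hψ : ψ ∈ F.potentials X) {s t : ℝ} (hs : 0 ≤ s)
    (ht : 0 ≤ t) (hst : s + t = 1) (μ : Measure X) [IsFiniteMeasure μ] :
    ∫ x, F.revConjReal ((s • φ + t • ψ) x) ∂μ
      ≤ s * ∫ x, F.revConjReal (φ x) ∂μ + t * ∫ x, F.revConjReal (ψ x) ∂μ := by
  rw [← integral_const_mul, ← integral_const_mul, ← integral_add
    ((integrable_revConjReal hφ μ).const_mul s) ((integrable_revConjReal hψ μ).const_mul t)]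
  refine integral_mono (integrable_revConjReal (convex_potentials hφ hψ hs ht hst) μ)
    (((integrable_revConjReal hφ μ).const_mul s).add ((integrable_revConjReal hψ μ).const_mul t))
    fun x => ?_
  exact F.convexOn_revConjReal.2 (apply_mem_dualDom hφ x) (apply_mem_dualDom hψ x) hs ht hst

theorem continuous_revConjReal_add_integral_sub {F₁ F₂ : EntropyFn} {Z : Type*}
    [TopologicalSpace Z] [MeasurableSpace X] [BorelSpace X] {φ₁ : Z →ᵇ ℝ}
    (hφ₁ : φ₁ ∈ F₁.potentials Z) {φ₂ : X →ᵇ ℝ} (hφ₂ : φ₂ ∈ F₂.potentials X) (K : ℝ) :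
    Continuous fun y : Z × ProbabilityMeasure X =>
      F₁.revConjReal (φ₁ y.1) + ∫ x, F₂.revConjReal (φ₂ x) ∂(y.2 : Measure X) - K :=
  (((revConjComp hφ₁).continuous.comp continuous_fst).add
    ((continuous_probabilityMeasure_integral (revConjComp hφ₂)).comp
      continuous_snd)).sub continuous_const

end EntropyFn

section CompactDuality

variable {Z₁ Z₂ : Type*} [TopologicalSpace Z₁] [MeasurableSpace Z₁]
  [TopologicalSpace Z₂] [MeasurableSpace Z₂] [BorelSpace Z₂] {F₁ F₂ : EntropyFn} {K : ℝ}
  {μ₁ : Measure Z₁} {μ₂ : Measure Z₂}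

variable (F₁ F₂ K μ₁ μ₂) in
/-- The hypograph of the value of the dual problem as a function of the continuous cost `f + K`
on `Z₁ × 𝒫(Z₂)`. -/
def dualHypograph : Set (C(Z₁ × ProbabilityMeasure Z₂, ℝ) × ℝ) :=
  {q | ∃ φ₁ ∈ F₁.potentials Z₁, ∃ φ₂ ∈ F₂.potentials Z₂,
    (∀ z (p : ProbabilityMeasure Z₂),
      F₁.revConjReal (φ₁ z) + ∫ x, F₂.revConjReal (φ₂ x) ∂(p : Measure Z₂) - K ≤ q.1 (z, p)) ∧
    q.2 ≤ ∫ x, φ₁ x ∂μ₁ + ∫ x, φ₂ x ∂μ₂}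

theorem exists_mem_dualHypograph_mem_strictMinorants (hF₁ : F₁.Superlinear)
    (c : Z₁ × ProbabilityMeasure Z₂ → ℝ≥0∞) :
    ∃ q ∈ dualHypograph F₁ F₂ K μ₁ μ₂, q.1 ∈ strictMinorants c := by
  obtain ⟨k, hk, hle⟩ := hF₁.exists_neg_revConjReal_le (K - 1)
  have hle' := F₂.revConjReal_nonpos (neg_one_lt_zero (R := ℝ))
  refine ⟨(.const _ (-1), _), ⟨.const Z₁ k, EntropyFn.const_mem_potentials hk, .const Z₂ (-1),
    EntropyFn.const_mem_potentials neg_one_lt_zero, fun z p => ?_, le_rfl⟩, fun y => ?_⟩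
  · simp only [BoundedContinuousFunction.const_apply, integral_const, probReal_univ, one_smul,
      ContinuousMap.const_apply]
    linarith
  · exact (EReal.coe_neg'.2 neg_one_lt_zero).trans_le (EReal.coe_ennreal_nonneg _)

variable [BorelSpace Z₁] [IsFiniteMeasure μ₁] [IsFiniteMeasure μ₂]

theorem convex_dualHypograph : Convex ℝ (dualHypograph F₁ F₂ K μ₁ μ₂) := by
  rintro q ⟨φ₁, hφ₁, φ₂, hφ₂, hφ, hq⟩ r ⟨ψ₁, hψ₁, ψ₂, hψ₂, hψ, hr⟩ s t hs ht hst
  refine ⟨s • φ₁ + t • ψ₁, EntropyFn.convex_potentials hφ₁ hψ₁ hs ht hst, s • φ₂ + t • ψ₂,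
    EntropyFn.convex_potentials hφ₂ hψ₂ hs ht hst, fun z p => ?_, ?_⟩
  · have h₁ := F₁.convexOn_revConjReal.2 (EntropyFn.apply_mem_dualDom hφ₁ z)
      (EntropyFn.apply_mem_dualDom hψ₁ z) hs ht hst
    have h₂ := EntropyFn.integral_revConjReal_combo_le hφ₂ hψ₂ hs ht hst (p : Measure Z₂)
    calc _ ≤ s * (F₁.revConjReal (φ₁ z) + ∫ x, F₂.revConjReal (φ₂ x) ∂(p : Measure Z₂) - K)
          + t * (F₁.revConjReal (ψ₁ z) + ∫ x, F₂.revConjReal (ψ₂ x) ∂(p : Measure Z₂) - K) := by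
          linear_combination h₁ + h₂ + K * hst
      _ ≤ s * q.1 (z, p) + t * r.1 (z, p) :=
          add_le_add (mul_le_mul_of_nonneg_left (hφ z p) hs)
            (mul_le_mul_of_nonneg_left (hψ z p) ht)
  · rw [integral_boundedContinuous_combo, integral_boundedContinuous_combo]
    calc s * q.2 + t * r.2 ≤ _ :=
          add_le_add (mul_le_mul_of_nonneg_left hq hs) (mul_le_mul_of_nonneg_left hr ht)
      _ = _ := by ring

theorem exists_finiteMeasure_entF_add_entF_add_lintegral_le
    [CompactSpace Z₁] [TopologicalSpace.MetrizableSpace Z₁] [CompactSpace Z₂]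
    [TopologicalSpace.MetrizableSpace Z₂] (hF₁ : F₁.Superlinear) (hF₂ : F₂.Superlinear)
    {c : Z₁ × ProbabilityMeasure Z₂ → ℝ≥0∞} (hc : LowerSemicontinuous c) {v : ℝ}
    (hv : ∀ φ₁ ∈ F₁.potentials Z₁, ∀ φ₂ ∈ F₂.potentials Z₂,
      (∀ z (p : ProbabilityMeasure Z₂), ((F₁.revConjReal (φ₁ z)
        + ∫ x, F₂.revConjReal (φ₂ x) ∂(p : Measure Z₂) - K : ℝ) : EReal) < (c (z, p) : EReal)) →
      ∫ x, φ₁ x ∂μ₁ + ∫ x, φ₂ x ∂μ₂ ≤ v) :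
    ∃ Γ : Measure (Z₁ × ProbabilityMeasure Z₂), IsFiniteMeasure Γ ∧
      ((entF F₁ Γ.fst μ₁ + entF F₂ (barycenter Γ.snd) μ₂ + ∫⁻ y, c y ∂Γ : ℝ≥0∞) : EReal)
        ≤ ((v - K * Γ.real univ : ℝ) : EReal) := by
  have : BorelSpace (ProbabilityMeasure Z₂) := borelSpace_probabilityMeasure
  obtain ⟨Γ, hΓ, hle⟩ := exists_finiteMeasure_lintegral_le hc convex_dualHypograph
    (exists_mem_dualHypograph_mem_strictMinorants (K := K) (μ₁ := μ₁) (μ₂ := μ₂) hF₁ c)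
    fun q ⟨φ₁, hφ₁, φ₂, hφ₂, hφ, hq⟩ hqc => hq.trans (hv φ₁ hφ₁ φ₂ hφ₂ fun z p =>
      (EReal.coe_le_coe_iff.2 (hφ z p)).trans_lt (hqc (z, p)))
  have hI : ∫⁻ y, c y ∂Γ ≠ ∞ := by
    obtain ⟨q, hq, -⟩ := exists_mem_dualHypograph_mem_strictMinorants hF₁ c
    exact (EReal.coe_ennreal_lt_coe_ennreal_iff (y := ∞)).1
      ((hle q hq).trans_lt (EReal.coe_lt_top _)) |>.ne
  refine ⟨Γ, hΓ, ?_⟩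
  have hent : (entF F₁ Γ.fst μ₁ + entF F₂ (barycenter Γ.snd) μ₂ : EReal)
      ≤ ((v - K * Γ.real univ - (∫⁻ y, c y ∂Γ).toReal : ℝ) : EReal) := by
    refine coe_ennreal_add_le_of_forall_lt fun a b ha hb => ?_
    obtain ⟨φ₁, hφ₁, hφa⟩ := hF₁.exists_potential_lt_of_lt_entF ha
    obtain ⟨φ₂, hφ₂, hφb⟩ := hF₂.exists_potential_lt_of_lt_entF hb
    have hq := hle (⟨_, EntropyFn.continuous_revConjReal_add_integral_sub hφ₁ hφ₂ K⟩, _)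
      ⟨φ₁, hφ₁, φ₂, hφ₂, fun _ _ => le_rfl, le_rfl⟩
    rw [← EReal.coe_ennreal_toReal hI, EReal.coe_le_coe_iff] at hq
    have hsplit := integral_add_integral_sub (EntropyFn.integrable_revConjReal hφ₁ Γ.fst)
      (EntropyFn.integrable_revConjReal hφ₂ (barycenter Γ.snd)) K
    simp only [ContinuousMap.coe_mk] at hq
    simp only [EntropyFn.revConjComp_apply] at hφa hφb
    linarith
  rw [EReal.coe_ennreal_add, EReal.coe_ennreal_add, ← EReal.coe_ennreal_toReal hI]
  refine (add_le_add_left hent _).trans_eq ?_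
  rw [← EReal.coe_add, sub_add_cancel]

end CompactDuality

theorem map_singularPart {X Z : Type*} [MeasurableSpace X] [MeasurableSpace Z]
    (γ μ : Measure X) [SigmaFinite γ] [SigmaFinite μ] {f : X → Z} (hf : MeasurableEmbedding f) :
    (γ.singularPart μ).map f = (γ.map f).singularPart (μ.map f) := by
  refine Measure.eq_singularPart (Measure.measurable_rnDeriv (γ.map f) (μ.map f))
    (hf.mutuallySingular_map (γ.mutuallySingular_singularPart μ)) ?_
  rw [← hf.map_withDensity_rnDeriv, ← Measure.map_add _ _ hf.measurable,
    ← γ.haveLebesgueDecomposition_add μ]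

theorem entF_map {X Z : Type*} [MeasurableSpace X] [MeasurableSpace Z] (F : EntropyFn)
    (γ μ : Measure X) [SigmaFinite γ] [SigmaFinite μ] {f : X → Z} (hf : MeasurableEmbedding f) :
    entF F (γ.map f) (μ.map f) = entF F γ μ := by
  rw [entF, entF, hf.lintegral_map, ← map_singularPart γ μ hf, hf.map_apply, preimage_univ]
  congr 1
  refine lintegral_congr_ae ?_
  filter_upwards [hf.rnDeriv_map γ μ] with x hx
  rw [hx]

section Embedding

variable {X₁ X₂ Z₁ Z₂ : Type*} [MeasurableSpace X₁] [MeasurableSpace X₂] [MeasurableSpace Z₁]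
  [MeasurableSpace Z₂] {f : X₁ → Z₁} {g : X₂ → Z₂}

theorem fst_map_prodMap (Γ : Measure (X₁ × X₂)) (hf : Measurable f) (hg : Measurable g) :
    (Γ.map (Prod.map f g)).fst = Γ.fst.map f := by
  rw [Measure.fst, Measure.fst, Measure.map_map measurable_fst (hf.prodMap hg),
    Measure.map_map hf measurable_fst, Prod.map_fst']

theorem snd_map_prodMap (Γ : Measure (X₁ × X₂)) (hf : Measurable f) (hg : Measurable g) :
    (Γ.map (Prod.map f g)).snd = Γ.snd.map g := by
  rw [Measure.snd, Measure.snd, Measure.map_map measurable_snd (hf.prodMap hg),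
    Measure.map_map hg measurable_snd, Prod.map_snd']

theorem exists_map_prodMap_eq (hf : MeasurableEmbedding f) (hg : MeasurableEmbedding g)
    {Γ : Measure (Z₁ × ProbabilityMeasure Z₂)} (hfst : Γ.fst (range f)ᶜ = 0)
    (hsnd : barycenter Γ.snd (range g)ᶜ = 0) : ∃ Γ' : Measure (X₁ × ProbabilityMeasure X₂),
      Γ'.map (Prod.map f fun p : ProbabilityMeasure X₂ => p.map hg.measurable.aemeasurable)
        = Γ := by
  have hj := hf.prodMap (measurableEmbedding_probabilityMeasure_map hg)
  refine ⟨Γ.comap _, (hj.map_comap Γ).trans (Measure.restrict_eq_self_of_ae_mem ?_)⟩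
  have hmeas := measurable_probabilityMeasure_apply hg.measurableSet_range.compl
  rw [barycenter_apply hg.measurableSet_range.compl, lintegral_eq_zero_iff hmeas] at hsnd
  have h₁ := ae_of_ae_map measurable_fst.aemeasurable (measure_eq_zero_iff_ae_notMem.1 hfst)
  have h₂ := ae_of_ae_map measurable_snd.aemeasurable hsnd
  filter_upwards [h₁, h₂] with y hy₁ hy₂
  rw [range_prodMap, range_probabilityMeasure_map hg]
  exact ⟨not_not.1 hy₁, hy₂⟩

theorem exists_map_prodMap_eq_of_entF_ne_top (hf : MeasurableEmbedding f)
    (hg : MeasurableEmbedding g) {F₁ F₂ : EntropyFn} (hF₁ : F₁.Superlinear)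
    (hF₂ : F₂.Superlinear) {Γ : Measure (Z₁ × ProbabilityMeasure Z₂)} [IsFiniteMeasure Γ]
    {μ₁ : Measure X₁} [IsFiniteMeasure μ₁] {μ₂ : Measure X₂} [IsFiniteMeasure μ₂]
    (h₁ : entF F₁ Γ.fst (μ₁.map f) ≠ ∞) (h₂ : entF F₂ (barycenter Γ.snd) (μ₂.map g) ≠ ∞) :
    ∃ Γ' : Measure (X₁ × ProbabilityMeasure X₂), IsFiniteMeasure Γ' ∧
      Γ'.map (Prod.map f fun p : ProbabilityMeasure X₂ => p.map hg.measurable.aemeasurable) = Γ ∧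
      entF F₁ Γ'.fst μ₁ = entF F₁ Γ.fst (μ₁.map f) ∧
      entF F₂ (barycenter Γ'.snd) μ₂ = entF F₂ (barycenter Γ.snd) (μ₂.map g) := by
  have hfst : Γ.fst (range f)ᶜ = 0 := hF₁.absolutelyContinuous h₁ (map_compl_range hf μ₁)
  have hsnd : barycenter Γ.snd (range g)ᶜ = 0 :=
    hF₂.absolutelyContinuous h₂ (map_compl_range hg μ₂)
  obtain ⟨Γ', rfl⟩ := exists_map_prodMap_eq hf hg hfst hsnd
  have hmap := measurable_probabilityMeasure_map hg.measurable
  have hΓ' : IsFiniteMeasure Γ' :=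
    Measure.isFiniteMeasure_of_map (hf.measurable.prodMap hmap).aemeasurable
  refine ⟨Γ', hΓ', rfl, ?_, ?_⟩
  · rw [fst_map_prodMap Γ' hf.measurable hmap, entF_map F₁ _ _ hf]
  · rw [snd_map_prodMap Γ' hf.measurable hmap, barycenter_map hg.measurable, entF_map F₂ _ _ hg]

end Embedding

section PolishDuality

variable {X₁ X₂ : Type*} [TopologicalSpace X₁] [PolishSpace X₁] [MeasurableSpace X₁]
  [BorelSpace X₁] [TopologicalSpace X₂] [PolishSpace X₂] [MeasurableSpace X₂] [BorelSpace X₂]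
  {F₁ F₂ : EntropyFn} {K : ℝ} {μ₁ : Measure X₁} {μ₂ : Measure X₂} [IsFiniteMeasure μ₁]
  [IsFiniteMeasure μ₂]

theorem exists_finiteMeasure_entF_add_entF_add_lintegral_le_of_polishSpace
    (hF₁ : F₁.Superlinear) (hF₂ : F₂.Superlinear)
    {c : X₁ × ProbabilityMeasure X₂ → ℝ≥0∞} (hc : LowerSemicontinuous c) {v : ℝ}
    (hv : ∀ φ₁ ∈ F₁.potentials X₁, ∀ φ₂ ∈ F₂.potentials X₂,
      (∀ x (p : ProbabilityMeasure X₂), ((F₁.revConjReal (φ₁ x)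
        + ∫ x, F₂.revConjReal (φ₂ x) ∂(p : Measure X₂) - K : ℝ) : EReal) ≤ (c (x, p) : EReal)) →
      ∫ x, φ₁ x ∂μ₁ + ∫ x, φ₂ x ∂μ₂ ≤ v) :
    ∃ Γ : Measure (X₁ × ProbabilityMeasure X₂), IsFiniteMeasure Γ ∧
      ((entF F₁ Γ.fst μ₁ + entF F₂ (barycenter Γ.snd) μ₂ + ∫⁻ y, c y ∂Γ : ℝ≥0∞) : EReal)
        ≤ ((v - K * Γ.real univ : ℝ) : EReal) := by
  obtain ⟨ι₁, hι₁⟩ := exists_isEmbedding_compact_metrizable X₁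
  obtain ⟨ι₂, hι₂⟩ := exists_isEmbedding_compact_metrizable X₂
  have hm₁ := hι₁.continuous.measurableEmbedding hι₁.injective
  have hm₂ := hι₂.continuous.measurableEmbedding hι₂.injective
  let j₂ := fun p : ProbabilityMeasure X₂ => p.map hm₂.measurable.aemeasurable
  have hj : IsInducing (Prod.map ι₁ j₂) :=
    hι₁.isInducing.prodMap (isInducing_probabilityMeasure_map hι₂.isInducing)
  have hjm : MeasurableEmbedding (Prod.map ι₁ j₂) :=
    hm₁.prodMap (measurableEmbedding_probabilityMeasure_map hm₂)
  obtain ⟨Γ, hΓ, hle⟩ := exists_finiteMeasure_entF_add_entF_add_lintegral_le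
    (μ₁ := μ₁.map ι₁) (μ₂ := μ₂.map ι₂) (K := K) (v := v) hF₁ hF₂
    (lowerSemicontinuous_lscExtension (Prod.map ι₁ j₂) c) fun φ₁ hφ₁ φ₂ hφ₂ hφ => by
      rw [hm₁.integral_map, hm₂.integral_map]
      refine hv _ (EntropyFn.comp_mem_potentials hφ₁ ⟨ι₁, hι₁.continuous⟩)
        _ (EntropyFn.comp_mem_potentials hφ₂ ⟨ι₂, hι₂.continuous⟩) fun x p => ?_
      have hxp := (hφ (ι₁ x) (j₂ p)).le
      have hint : ∫ z, F₂.revConjReal (φ₂ z) ∂(j₂ p : Measure (ℕ → unitInterval))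
          = ∫ x, F₂.revConjReal (φ₂ (ι₂ x)) ∂(p : Measure X₂) := hm₂.integral_map _
      have hlsc := lscExtension_apply hj hc (x, p)
      rw [Prod.map_apply] at hlsc
      rwa [hint, hlsc] at hxp
  have hfin := ((EReal.coe_ennreal_lt_coe_ennreal_iff (y := ∞)).1
    (hle.trans_lt (EReal.coe_lt_top _))).ne
  obtain ⟨⟨hfin₁, hfin₂⟩, -⟩ : (_ ∧ _) ∧ _ := by
    simpa only [ne_eq, ENNReal.add_eq_top, not_or] using hfin
  obtain ⟨Γ', hΓ', rfl, h₁, h₂⟩ :=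
    exists_map_prodMap_eq_of_entF_ne_top hm₁ hm₂ hF₁ hF₂ hfin₁ hfin₂
  refine ⟨Γ', hΓ', ?_⟩
  have hc' : ∫⁻ y, lscExtension (Prod.map ι₁ j₂) c y ∂(Γ'.map (Prod.map ι₁ j₂)) = ∫⁻ y, c y ∂Γ' :=
    (hjm.lintegral_map _).trans (lintegral_congr (lscExtension_apply hj hc))
  have hmass : (Γ'.map (Prod.map ι₁ j₂)).real univ = Γ'.real univ :=
    congrArg ENNReal.toReal (by rw [hjm.map_apply, preimage_univ])
  rwa [← h₁, ← h₂, hc', hmass] at hle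

end PolishDuality

section PolishProbabilityMeasure

variable {X : Type*} [TopologicalSpace X] [PolishSpace X] [MeasurableSpace X] [BorelSpace X]

instance : BorelSpace (ProbabilityMeasure X) := by
  obtain ⟨ι, hι⟩ := exists_isEmbedding_compact_metrizable X
  have : BorelSpace (ProbabilityMeasure (ℕ → unitInterval)) := borelSpace_probabilityMeasure
  have hmeas := measurableEmbedding_probabilityMeasure_map
    (hι.continuous.measurableEmbedding hι.injective)
  exact ⟨by rw [(isInducing_probabilityMeasure_map hι.isInducing).eq_induced, borel_comap,
    ← BorelSpace.measurable_eq, hmeas.comap_eq]⟩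

instance : StandardBorelSpace (ProbabilityMeasure X) := by
  obtain ⟨ι, hι⟩ := exists_isEmbedding_compact_metrizable X
  have : BorelSpace (ProbabilityMeasure (ℕ → unitInterval)) := borelSpace_probabilityMeasure
  obtain ⟨f, hf⟩ := exists_isClosedEmbedding_probabilityMeasure (Z := ℕ → unitInterval)
  have := hf.polishSpace
  exact standardBorelSpace_of_measurableEmbedding (measurableEmbedding_probabilityMeasure_map
    (hι.continuous.measurableEmbedding hι.injective))

end PolishProbabilityMeasure

section Jensen

variable {X : Type*} [MeasurableSpace X]

/-- Convexity of an extended-valued function on probability measures, along the mixtures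
`t p + (1 - t) q`. -/
def MixtureConvex (g : ProbabilityMeasure X → ℝ≥0∞) : Prop :=
  ∀ (p q m : ProbabilityMeasure X) (t : ℝ), 0 ≤ t → t ≤ 1 →
    (m : Measure X)
      = ENNReal.ofReal t • (p : Measure X) + ENNReal.ofReal (1 - t) • (q : Measure X) →
    g m ≤ ENNReal.ofReal t * g p + ENNReal.ofReal (1 - t) * g q

theorem integral_mixture {μ ν : Measure X} {f : X → ℝ} (hμ : Integrable f μ) (hν : Integrable f ν)
    {a b : ℝ} (ha : 0 ≤ a) (hb : 0 ≤ b) :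
    ∫ x, f x ∂(ENNReal.ofReal a • μ + ENNReal.ofReal b • ν)
      = a * ∫ x, f x ∂μ + b * ∫ x, f x ∂ν := by
  rw [integral_add_measure (hμ.smul_measure ENNReal.ofReal_ne_top)
    (hν.smul_measure ENNReal.ofReal_ne_top), integral_smul_measure, integral_smul_measure,
    ENNReal.toReal_ofReal ha, ENNReal.toReal_ofReal hb, smul_eq_mul, smul_eq_mul]

theorem isProbabilityMeasure_mixture {μ ν : Measure X} [IsProbabilityMeasure μ]
    [IsProbabilityMeasure ν] {a b : ℝ} (ha : 0 ≤ a) (hb : 0 ≤ b) (hab : a + b = 1) :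
    IsProbabilityMeasure (ENNReal.ofReal a • μ + ENNReal.ofReal b • ν) :=
  ⟨by simp [← ENNReal.ofReal_add ha hb, hab]⟩

variable [TopologicalSpace X] {g : ProbabilityMeasure X → ℝ≥0∞}

/-- The moments of a probability measure against a family of test functions. -/
def moments {ι : Type*} (f : ι → X →ᵇ ℝ) (p : ProbabilityMeasure X) (i : ι) : ℝ :=
  ∫ x, f i x ∂(p : Measure X)

/-- The image of the epigraph of `g` under the moments against the test functions `f`. -/
def momentEpigraph {ι : Type*} (f : ι → X →ᵇ ℝ) (g : ProbabilityMeasure X → ℝ≥0∞) :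
    Set ((ι → ℝ) × ℝ) :=
  {w | ∃ q, moments f q = w.1 ∧ g q ≤ ENNReal.ofReal w.2 ∧ 0 ≤ w.2}

variable [BorelSpace X] {ι : Type*} (f : ι → X →ᵇ ℝ)

theorem nhds_probabilityMeasure_eq_comap_moments (p : ProbabilityMeasure X) :
    𝓝 p = comap (moments id) (𝓝 (moments id p)) := by
  refine le_antisymm ((continuous_pi continuous_probabilityMeasure_integral).tendsto p).le_comap ?_
  change Tendsto id (comap (moments id) (𝓝 (moments id p))) (𝓝 p)
  exact ProbabilityMeasure.tendsto_iff_forall_integral_tendsto.2 fun f =>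
    tendsto_pi_nhds.1 (tendsto_comap (f := moments id)) f

theorem exists_moments_nhds_subset {p : ProbabilityMeasure X} {U : Set (ProbabilityMeasure X)}
    (hU : U ∈ 𝓝 p) :
    ∃ I : Set (X →ᵇ ℝ), I.Finite ∧ ∃ W ∈ 𝓝 (moments ((↑) : I → X →ᵇ ℝ) p),
      moments ((↑) : I → X →ᵇ ℝ) ⁻¹' W ⊆ U := by
  rw [nhds_probabilityMeasure_eq_comap_moments, nhds_pi] at hU
  obtain ⟨V, hV, hVU⟩ := hU
  obtain ⟨I, hI, t, ht, htV⟩ := mem_pi.1 hV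
  have := hI.to_subtype
  exact ⟨I, hI, univ.pi fun f => t f, set_pi_mem_nhds finite_univ fun f _ => ht f,
    fun q hq => hVU (htV fun f hf => hq ⟨f, hf⟩ (mem_univ _))⟩

theorem MixtureConvex.convex_momentEpigraph (hg : MixtureConvex g) :
    Convex ℝ (momentEpigraph f g) := by
  rintro ⟨v, s⟩ ⟨p, rfl, hps, hs : 0 ≤ s⟩ ⟨w, r⟩ ⟨q, rfl, hqr, hr : 0 ≤ r⟩ a b ha hb hab
  have hp := p.2
  have hq := q.2
  let m : ProbabilityMeasure X := ⟨_, isProbabilityMeasure_mixture (μ := p.1) (ν := q.1) ha hb hab⟩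
  refine ⟨m, funext fun i => integral_mixture ((f i).integrable _) ((f i).integrable _) ha hb,
    ?_, add_nonneg (mul_nonneg ha hs) (mul_nonneg hb hr)⟩
  have hb' : 1 - a = b := by linarith
  calc g m ≤ ENNReal.ofReal a * g p + ENNReal.ofReal b * g q :=
        hb' ▸ hg p q m a ha (by linarith) (by rw [hb']; rfl)
    _ ≤ ENNReal.ofReal a * ENNReal.ofReal s + ENNReal.ofReal b * ENNReal.ofReal r := by gcongr
    _ = ENNReal.ofReal (a * s + b * r) := by
      rw [ENNReal.ofReal_add (mul_nonneg ha hs) (mul_nonneg hb hr), ENNReal.ofReal_mul ha,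
        ENNReal.ofReal_mul hb]

theorem MixtureConvex.moments_mem_closure_momentEpigraph [Finite ι] (hg : MixtureConvex g)
    {ρ : Measure (ProbabilityMeasure X)} [IsProbabilityMeasure ρ] (hgm : AEMeasurable g ρ)
    (hfin : ∫⁻ p, g p ∂ρ ≠ ∞) {m : ProbabilityMeasure X} (hm : (m : Measure X) = barycenter ρ) :
    (moments f m, (∫⁻ p, g p ∂ρ).toReal) ∈ closure (momentEpigraph f g) := by
  have := Fintype.ofFinite ι
  have hlt : ∀ᵐ p ∂ρ, g p < ∞ := ae_lt_top' hgm hfin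
  have hf : ∀ i, Integrable (fun p => moments f p i) ρ := fun i =>
    integrable_integral_barycenter ((f i).integrable _)
  have hmom : Integrable (moments f) ρ := Integrable.of_eval hf
  have htoReal : Integrable (fun p => (g p).toReal) ρ :=
    integrable_toReal_of_lintegral_ne_top hgm hfin
  have hmean : ∫ p, (moments f p, (g p).toReal) ∂ρ = (moments f m, (∫⁻ p, g p ∂ρ).toReal) := by
    rw [integral_pair hmom htoReal, integral_toReal hgm hlt]
    congr 1
    ext i
    rw [eval_integral hf, moments, hm, integral_barycenter ((f i).integrable _)]
    rfl
  refine hmean ▸ (hg.convex_momentEpigraph f).closure.integral_mem isClosed_closure ?_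
    (hmom.prodMk htoReal)
  filter_upwards [hlt] with p hp
  exact subset_closure ⟨p, rfl, (ENNReal.ofReal_toReal hp.ne).ge, ENNReal.toReal_nonneg⟩

theorem MixtureConvex.le_lintegral_of_eq_barycenter [OpensMeasurableSpace (ProbabilityMeasure X)]
    (hg : MixtureConvex g) (hlsc : LowerSemicontinuous g) {ρ : Measure (ProbabilityMeasure X)}
    [IsProbabilityMeasure ρ] {m : ProbabilityMeasure X} (hm : (m : Measure X) = barycenter ρ) :
    g m ≤ ∫⁻ p, g p ∂ρ := by
  by_contra! hlt
  obtain ⟨c, hρc, hcm⟩ := ENNReal.lt_iff_exists_nnreal_btwn.1 hlt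
  have hfin : ∫⁻ p, g p ∂ρ ≠ ∞ := hlt.ne_top
  obtain ⟨I, hI, W, hW, hWg⟩ := exists_moments_nhds_subset (hlsc m c hcm)
  have := hI.to_subtype
  have hnhds : W ×ˢ Iio (c : ℝ) ∈ 𝓝 (moments (↑) m, (∫⁻ p, g p ∂ρ).toReal) :=
    prod_mem_nhds hW (Iio_mem_nhds (ENNReal.toReal_lt_of_lt_ofReal (by simpa using hρc)))
  obtain ⟨⟨v, r⟩, ⟨hv, hrc⟩, q, rfl, hgr, -⟩ := mem_closure_iff_nhds.1
    (hg.moments_mem_closure_momentEpigraph _ hlsc.measurable.aemeasurable hfin hm) _ hnhds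
  have hcg : (c : ℝ≥0∞) < g q := hWg hv
  refine hcg.not_ge (hgr.trans ?_)
  simpa using ENNReal.ofReal_le_ofReal (le_of_lt hrc)

end Jensen

section ENNRealShift

theorem coe_toENNReal_sub_add {K : ℝ} {a : EReal} (h : (K : EReal) ≤ a) :
    ((a - K).toENNReal : EReal) + K = a := by
  have hnonneg : 0 ≤ a - K := 
    (EReal.sub_nonneg (.inr (EReal.coe_ne_top K)) (.inr (EReal.coe_ne_bot K))).2 h
  rw [EReal.coe_toENNReal hnonneg, EReal.sub_add_cancel]

theorem monotone_toENNReal_sub (K : ℝ) : Monotone fun a : EReal => (a - K).toENNReal :=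
  fun _ _ h => EReal.toENNReal_le_toENNReal (EReal.sub_le_sub h le_rfl)

theorem continuous_toENNReal_sub (K : ℝ) : Continuous fun a : EReal => (a - K).toENNReal := by
  have hsub : Continuous fun a : EReal => a - (K : EReal) := continuous_iff_continuousAt.2 fun a =>
    (EReal.continuousAt_add (p := (a, -(K : EReal))) (.inr (by simp [← EReal.coe_neg]))
      (.inr (by simp [← EReal.coe_neg]))).comp (f := fun a : EReal => (a, -(K : EReal)))
      (by fun_prop)
  exact EReal.continuous_toENNReal.comp hsub

theorem lowerSemicontinuous_toENNReal_sub {Y : Type*} [TopologicalSpace Y] {f : Y → EReal}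
    (hf : LowerSemicontinuous f) (K : ℝ) : LowerSemicontinuous fun y => (f y - K).toENNReal :=
  (continuous_toENNReal_sub K).comp_lowerSemicontinuous hf (monotone_toENNReal_sub K)

theorem toENNReal_sub_le_of_le_combo {K t : ℝ} {a b m : EReal} (ht₀ : 0 ≤ t) (ht₁ : t ≤ 1)
    (ha : (K : EReal) ≤ a) (hb : (K : EReal) ≤ b)
    (h : m ≤ (t : EReal) * a + ((1 - t : ℝ) : EReal) * b) :
    (m - K).toENNReal
      ≤ ENNReal.ofReal t * (a - K).toENNReal + ENNReal.ofReal (1 - t) * (b - K).toENNReal := by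
  have hdistrib : ∀ {s : ℝ} {x y : EReal}, 0 ≤ s → (s : EReal) * (x + y) = s * x + s * y :=
    fun hs => EReal.left_distrib_of_nonneg_of_ne_top (EReal.coe_nonneg.2 hs)
      (EReal.coe_ne_top _) _ _
  have hK : (t : EReal) * K + ((1 - t : ℝ) : EReal) * K = K := by
    rw [← EReal.coe_mul, ← EReal.coe_mul, ← EReal.coe_add]
    ring_nf
  rw [← coe_toENNReal_sub_add ha, ← coe_toENNReal_sub_add hb,
    hdistrib ht₀, hdistrib (sub_nonneg.2 ht₁), add_add_add_comm, hK] at h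
  have hcoe : ∀ {s : ℝ}, 0 ≤ s → (s : EReal) = (ENNReal.ofReal s : EReal) := fun hs => by
    rw [EReal.coe_ennreal_ofReal, max_eq_left hs]
  rw [hcoe ht₀, hcoe (sub_nonneg.2 ht₁), ← EReal.coe_ennreal_mul, ← EReal.coe_ennreal_mul,
    ← EReal.coe_ennreal_add] at h
  exact (EReal.toENNReal_le_toENNReal (EReal.sub_le_of_le_add h)).trans_eq EReal.toENNReal_coe

end ENNRealShift

section ExtendedIntegral

variable {α : Type*} [MeasurableSpace α] {μ : Measure α}

theorem posE_eq_toENNReal (a : EReal) : posE a = a.toENNReal := rfl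

theorem eIntegral_mono_ae {f g : α → EReal} (h : f ≤ᵐ[μ] g) : eIntegral μ f ≤ eIntegral μ g := by
  refine EReal.sub_le_sub ?_ ?_ <;>
    refine EReal.coe_ennreal_le_coe_ennreal_iff.2 (lintegral_mono_ae ?_)
  · exact h.mono fun x hx => EReal.toENNReal_le_toENNReal hx
  · exact h.mono fun x hx => EReal.toENNReal_le_toENNReal (EReal.neg_le_neg_iff.2 hx)

theorem eIntegral_coe {f : α → ℝ} (hf : Integrable f μ) :
    eIntegral μ (fun x => (f x : EReal)) = ((∫ x, f x ∂μ : ℝ) : EReal) := by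
  simp only [eIntegral, posE_eq_toENNReal, ← EReal.coe_neg,
    EReal.toENNReal_of_ne_top (EReal.coe_ne_top _), EReal.toReal_coe]
  rw [integral_eq_lintegral_pos_part_sub_lintegral_neg_part hf, EReal.coe_sub,
    EReal.coe_ennreal_toReal hf.lintegral_lt_top.ne]
  exact congrArg _ (EReal.coe_ennreal_toReal hf.neg.lintegral_lt_top.ne).symm

theorem eIntegral_le_lintegral_toENNReal_sub_add [IsFiniteMeasure μ] {f : α → EReal} {K : ℝ}
    (hf : Measurable f) (hK : ∀ x, (K : EReal) ≤ f x) :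
    eIntegral μ f ≤ ((∫⁻ x, (f x - K).toENNReal ∂μ : ℝ≥0∞) : EReal) + (K * μ.real univ : ℝ) := by
  by_cases hfin : ∫⁻ x, (f x - K).toENNReal ∂μ = ∞
  · rw [hfin, EReal.coe_ennreal_top, EReal.top_add_coe]
    exact le_top
  have hmeas : Measurable fun x => (f x - K).toENNReal :=
    (continuous_toENNReal_sub K).measurable.comp hf
  have hint := integrable_toReal_of_lintegral_ne_top hmeas.aemeasurable hfin
  have hlt := ae_lt_top hmeas hfin
  calc eIntegral μ f ≤ eIntegral μ fun x => (((f x - K).toENNReal.toReal + K : ℝ) : EReal) :=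
        eIntegral_mono_ae <| hlt.mono fun x hx => by
          dsimp only
          rw [EReal.coe_add, EReal.coe_ennreal_toReal hx.ne, coe_toENNReal_sub_add (hK x)]
    _ = ((∫ x, ((f x - K).toENNReal.toReal + K) ∂μ : ℝ) : EReal) :=
        eIntegral_coe (hint.add (integrable_const K))
    _ = _ := by
      rw [integral_add hint (integrable_const K), integral_toReal hmeas.aemeasurable hlt,
        integral_const, smul_eq_mul, mul_comm, EReal.coe_add, EReal.coe_ennreal_toReal hfin]

end ExtendedIntegral

section Flatten

open scoped ProbabilityTheory

instance {X : Type*} [MeasurableSpace X] [Nonempty X] : Nonempty (ProbabilityMeasure X) :=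
  ⟨⟨Measure.dirac (Classical.arbitrary X), inferInstance⟩⟩

variable {A X : Type*} [MeasurableSpace A] [TopologicalSpace X] [PolishSpace X]
  [MeasurableSpace X] [BorelSpace X] [Nonempty X]

/-- The measure `∫ δ_a ⊗ p dΓ(a, p)` on `A × X` induced by a measure `Γ` on `A × 𝒫(X)`. -/
def flatten (Γ : Measure (A × ProbabilityMeasure X)) [IsFiniteMeasure Γ] : Measure (A × X) :=
  Γ.fst ⊗ₘ (tautologicalKernel X ∘ₖ Γ.condKernel)

variable (Γ : Measure (A × ProbabilityMeasure X)) [IsFiniteMeasure Γ]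

instance : IsFiniteMeasure (flatten Γ) :=
  inferInstanceAs (IsFiniteMeasure (Γ.fst ⊗ₘ (tautologicalKernel X ∘ₖ Γ.condKernel)))

theorem fst_flatten : (flatten Γ).fst = Γ.fst := Measure.fst_compProd _ _

theorem snd_flatten : (flatten Γ).snd = barycenter Γ.snd := by
  have hsnd : Γ.condKernel ∘ₘ Γ.fst = Γ.snd := by
    rw [← Measure.snd_compProd, Measure.disintegrate]
  rw [flatten, Measure.snd_compProd, ← Measure.comp_assoc, hsnd]
  rfl

theorem condKernel_flatten_ae_eq :
    ∀ᵐ a ∂Γ.fst, (flatten Γ).condKernel a = barycenter (Γ.condKernel a) := by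
  have hae := ProbabilityTheory.eq_condKernel_of_measure_eq_compProd (ρ := flatten Γ)
    (tautologicalKernel X ∘ₖ Γ.condKernel) (by rw [fst_flatten, flatten])
  rw [fst_flatten] at hae
  filter_upwards [hae] with a ha
  rw [← ha, ProbabilityTheory.Kernel.comp_apply]
  rfl

theorem lintegral_condKernel_flatten_le {c : A × ProbabilityMeasure X → ℝ≥0∞} (hc : Measurable c)
    (hlsc : ∀ a, LowerSemicontinuous fun p => c (a, p))
    (hconv : ∀ a, MixtureConvex fun p => c (a, p)) :
    ∫⁻ a, c (a, ⟨(flatten Γ).condKernel a, inferInstance⟩) ∂Γ.fst ≤ ∫⁻ y, c y ∂Γ := by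
  rw [← Measure.lintegral_condKernel hc]
  refine lintegral_mono_ae ?_
  filter_upwards [condKernel_flatten_ae_eq Γ] with a ha
  exact (hconv a).le_lintegral_of_eq_barycenter (hlsc a) ha

end Flatten

theorem EntropyFn.Superlinear.eIntegral_revConj {X : Type*} [MeasurableSpace X] [TopologicalSpace X]
    [BorelSpace X] {F : EntropyFn} (hF : F.Superlinear) {φ : X →ᵇ ℝ} (hφ : φ ∈ F.potentials X)
    (μ : Measure X) [IsFiniteMeasure μ] :
    eIntegral μ (fun x => F.revConj (φ x)) = ((∫ x, F.revConjReal (φ x) ∂μ : ℝ) : EReal) := by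
  simp only [hF.revConj_eq_coe (EntropyFn.apply_mem_dualDom hφ _)]
  exact eIntegral_coe (EntropyFn.integrable_revConjReal hφ μ)

theorem mem_lamRSet_iff {X₁ X₂ : Type*} [TopologicalSpace X₁] [TopologicalSpace X₂]
    [MeasurableSpace X₂] [BorelSpace X₂] {C : X₁ → ProbabilityMeasure X₂ → EReal}
    {F₁ F₂ : EntropyFn} (hF₁ : F₁.Superlinear) (hF₂ : F₂.Superlinear)
    {φ : (X₁ →ᵇ ℝ) × (X₂ →ᵇ ℝ)} :
    φ ∈ lamRSet C F₁ F₂ ↔ φ.1 ∈ F₁.potentials X₁ ∧ φ.2 ∈ F₂.potentials X₂ ∧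
      ∀ x (p : ProbabilityMeasure X₂), ((F₁.revConjReal (φ.1 x)
        + ∫ y, F₂.revConjReal (φ.2 y) ∂(p : Measure X₂) : ℝ) : EReal) ≤ C x p := by
  refine and_congr_right fun h₁ => and_congr_right fun h₂ => forall₂_congr fun x p => ?_
  rw [hF₁.revConj_eq_coe (EntropyFn.apply_mem_dualDom h₁ x), hF₂.eIntegral_revConj h₂,
    ← EReal.coe_add]

section Duality

variable {X₁ X₂ : Type*} [TopologicalSpace X₁] [MeasurableSpace X₁] [BorelSpace X₁]
  [TopologicalSpace X₂] [MeasurableSpace X₂] [BorelSpace X₂] [Nonempty X₂]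
  {C : X₁ → ProbabilityMeasure X₂ → EReal} {F₁ F₂ : EntropyFn}

theorem integral_add_integral_le_wCost [StandardBorelSpace X₂]
    (hF₁ : F₁.Superlinear) (hF₂ : F₂.Superlinear) {φ : (X₁ →ᵇ ℝ) × (X₂ →ᵇ ℝ)}
    (hφ : φ ∈ lamRSet C F₁ F₂) (μ₁ : Measure X₁) (μ₂ : Measure X₂) [IsFiniteMeasure μ₁]
    [IsFiniteMeasure μ₂] (γ : Measure (X₁ × X₂)) (hγ : IsFiniteMeasure γ) :
    ((∫ x, φ.1 x ∂μ₁ + ∫ x, φ.2 x ∂μ₂ : ℝ) : EReal) ≤ wCost C F₁ F₂ μ₁ μ₂ γ hγ := by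
  obtain ⟨h₁, h₂, hC⟩ := (mem_lamRSet_iff hF₁ hF₂).1 hφ
  have hint₁ := EntropyFn.integrable_revConjReal h₁ γ.fst
  have hint₂ := EntropyFn.integrable_revConjReal h₂ γ.snd
  have hint₂' : Integrable (fun z : X₁ × X₂ => F₂.revConjReal (φ.2 z.2)) γ :=
    hint₂.comp_measurable measurable_snd
  have hsnd : ∫ x, ∫ y, F₂.revConjReal (φ.2 y) ∂(γ.condKernel x) ∂γ.fst
      = ∫ y, F₂.revConjReal (φ.2 y) ∂γ.snd :=
    (Measure.integral_condKernel hint₂').trans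
      (integral_map measurable_snd.aemeasurable hint₂.1).symm
  have hcost : ((∫ x, F₁.revConjReal (φ.1 x) ∂γ.fst + ∫ y, F₂.revConjReal (φ.2 y) ∂γ.snd : ℝ) :
      EReal) ≤ eIntegral γ.fst fun x => C x ⟨γ.condKernel x, inferInstance⟩ := by
    rw [← hsnd, ← integral_add hint₁ hint₂'.integral_condKernel]
    exact (eIntegral_coe (hint₁.add hint₂'.integral_condKernel)).symm.trans_le
      (eIntegral_mono_ae (.of_forall fun x => hC x ⟨γ.condKernel x, inferInstance⟩))
  refine le_of_eq_of_le ?_ (add_le_add (add_le_add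
    (hF₁.integral_sub_integral_revConjComp_le h₁) (hF₂.integral_sub_integral_revConjComp_le h₂))
    hcost)
  simp only [EntropyFn.revConjComp_apply]
  rw [← EReal.coe_add, ← EReal.coe_add]
  ring_nf

theorem wCost_flatten_le [PolishSpace X₁] [PolishSpace X₂]
    (hClsc : LowerSemicontinuous fun y : X₁ × ProbabilityMeasure X₂ => C y.1 y.2)
    {K : ℝ} (hK : ∀ x p, (K : EReal) ≤ C x p)
    (hCconv : ∀ x, MixtureConvex fun p => (C x p - K).toENNReal)
    (μ₁ : Measure X₁) (μ₂ : Measure X₂)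
    (Γ : Measure (X₁ × ProbabilityMeasure X₂)) [IsFiniteMeasure Γ] :
    wCost C F₁ F₂ μ₁ μ₂ (flatten Γ) inferInstance
      ≤ ((entF F₁ Γ.fst μ₁ + entF F₂ (barycenter Γ.snd) μ₂
          + ∫⁻ y, (C y.1 y.2 - K).toENNReal ∂Γ : ℝ≥0∞) : EReal) + (K * Γ.real univ : ℝ) := by
  have hlsc := lowerSemicontinuous_toENNReal_sub hClsc K
  have hmeas : Measurable fun x =>
      C x (⟨(flatten Γ).condKernel x, inferInstance⟩ : ProbabilityMeasure X₂) :=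
    hClsc.measurable.comp
      (measurable_id.prodMk (flatten Γ).condKernel.measurable.subtype_mk)
  have hjensen := lintegral_condKernel_flatten_le Γ hlsc.measurable
    (fun x => hlsc.comp (Continuous.prodMk_right x)) hCconv
  have hmass : Γ.fst.real univ = Γ.real univ := congrArg ENNReal.toReal Γ.fst_univ
  rw [wCost, fst_flatten, snd_flatten, EReal.coe_ennreal_add, EReal.coe_ennreal_add]
  refine le_of_le_of_eq (add_le_add le_rfl ((eIntegral_le_lintegral_toENNReal_sub_add hmeas
    fun x => hK x _).trans ?_)) (add_assoc _ _ _).symm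
  rw [hmass]
  exact add_le_add (EReal.coe_ennreal_le_coe_ennreal_iff.2 hjensen) le_rfl

theorem wOpt_le_of_forall_mem_lamRSet [PolishSpace X₁] [PolishSpace X₂]
    (hF₁ : F₁.Superlinear) (hF₂ : F₂.Superlinear)
    (hClsc : LowerSemicontinuous fun y : X₁ × ProbabilityMeasure X₂ => C y.1 y.2)
    {K : ℝ} (hK : ∀ x p, (K : EReal) ≤ C x p)
    (hCconv : ∀ x, MixtureConvex fun p => (C x p - K).toENNReal)
    {μ₁ : Measure X₁} {μ₂ : Measure X₂} [IsFiniteMeasure μ₁] [IsFiniteMeasure μ₂] {v : ℝ}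
    (hv : ∀ φ ∈ lamRSet C F₁ F₂, ∫ x, φ.1 x ∂μ₁ + ∫ x, φ.2 x ∂μ₂ ≤ v) :
    wOpt C F₁ F₂ μ₁ μ₂ ≤ v := by
  obtain ⟨Γ, hΓ, hle⟩ := exists_finiteMeasure_entF_add_entF_add_lintegral_le_of_polishSpace
    hF₁ hF₂ (lowerSemicontinuous_toENNReal_sub hClsc K) fun φ₁ h₁ φ₂ h₂ hφ =>
      hv (φ₁, φ₂) ((mem_lamRSet_iff hF₁ hF₂).2 ⟨h₁, h₂, fun x p => by
        rw [← coe_toENNReal_sub_add (hK x p), ← EReal.sub_le_iff_le_add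
          (.inl (EReal.coe_ne_bot K)) (.inl (EReal.coe_ne_top K)), ← EReal.coe_sub]
        exact hφ x p⟩)
  calc wOpt C F₁ F₂ μ₁ μ₂ ≤ wCost C F₁ F₂ μ₁ μ₂ (flatten Γ) inferInstance :=
        sInf_le ⟨_, _, rfl⟩
    _ ≤ _ := wCost_flatten_le hClsc hK hCconv μ₁ μ₂ Γ
    _ ≤ ((v - K * Γ.real univ : ℝ) : EReal) + (K * Γ.real univ : ℝ) := add_le_add hle le_rfl
    _ = v := by rw [← EReal.coe_add, sub_add_cancel]

end Duality

theorem stmt13_general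
    {X₁ : Type*} [TopologicalSpace X₁] [PolishSpace X₁] [MeasurableSpace X₁] [BorelSpace X₁]
    {X₂ : Type*} [TopologicalSpace X₂] [PolishSpace X₂] [MeasurableSpace X₂] [BorelSpace X₂]
    [Nonempty X₂]
    (C : X₁ → ProbabilityMeasure X₂ → EReal)
    (hClsc : LowerSemicontinuous fun q : X₁ × ProbabilityMeasure X₂ => C q.1 q.2)
    (hCbdd : ∃ K : ℝ, ∀ x p, (K : EReal) ≤ C x p)
    (hCconv : ∀ (x : X₁) (p q m : ProbabilityMeasure X₂) (t : ℝ), 0 ≤ t → t ≤ 1 →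
      (m : Measure X₂) = ENNReal.ofReal t • (p : Measure X₂)
          + ENNReal.ofReal (1 - t) • (q : Measure X₂) →
      C x m ≤ (t : EReal) * C x p + ((1 - t : ℝ) : EReal) * C x q)
    (F₁ F₂ : EntropyFn) (hF₁ : F₁.Superlinear) (hF₂ : F₂.Superlinear)
    (μ₁ : Measure X₁) (μ₂ : Measure X₂) [IsFiniteMeasure μ₁] [IsFiniteMeasure μ₂] :
    wOpt C F₁ F₂ μ₁ μ₂
      = sSup { e : EReal | ∃ φ ∈ lamRSet C F₁ F₂,
          e = (((∫ x, φ.1 x ∂μ₁) + ∫ x, φ.2 x ∂μ₂ : ℝ) : EReal) } := by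
  obtain ⟨K, hK⟩ := hCbdd
  refine le_antisymm (EReal.le_of_forall_lt_iff_le.1 fun v hv => ?_) (sSup_le ?_)
  · have hconv : ∀ x, MixtureConvex fun p => (C x p - K).toENNReal :=
      fun x p q m t ht₀ ht₁ hm => toENNReal_sub_le_of_le_combo ht₀ ht₁ (hK x p) (hK x q)
        (hCconv x p q m t ht₀ ht₁ hm)
    exact wOpt_le_of_forall_mem_lamRSet hF₁ hF₂ hClsc hK hconv fun φ hφ =>
      EReal.coe_le_coe_iff.1 (hv.le.trans' (le_sSup ⟨φ, hφ, rfl⟩))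
  · rintro _ ⟨φ, hφ, rfl⟩
    refine le_sInf ?_
    rintro _ ⟨γ, hγ, rfl⟩
    exact integral_add_integral_le_wCost hF₁ hF₂ hφ μ₁ μ₂ γ hγ

theorem stmt13
    {X₁ : Type*} [MetricSpace X₁] [PolishSpace X₁] [MeasurableSpace X₁] [BorelSpace X₁]
    [LocallyCompactSpace X₁]
    {X₂ : Type*} [MetricSpace X₂] [PolishSpace X₂] [MeasurableSpace X₂] [BorelSpace X₂]
    [LocallyCompactSpace X₂] [Nonempty X₂]
    (C : X₁ → ProbabilityMeasure X₂ → EReal)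
    (hClsc : LowerSemicontinuous fun q : X₁ × ProbabilityMeasure X₂ => C q.1 q.2)
    (hCbdd : ∃ K : ℝ, ∀ x p, (K : EReal) ≤ C x p)
    (hCconv : ∀ (x : X₁) (p q m : ProbabilityMeasure X₂) (t : ℝ), 0 ≤ t → t ≤ 1 →
      (m : Measure X₂) = ENNReal.ofReal t • (p : Measure X₂)
          + ENNReal.ofReal (1 - t) • (q : Measure X₂) →
      C x m ≤ (t : EReal) * C x p + ((1 - t : ℝ) : EReal) * C x q)
    (F₁ F₂ : EntropyFn) (hF₁ : F₁.Superlinear) (hF₂ : F₂.Superlinear) (hBM : HasBM X₂ F₂)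
    (μ₁ : Measure X₁) (μ₂ : Measure X₂) [IsFiniteMeasure μ₁] [IsFiniteMeasure μ₂] :
    wOpt C F₁ F₂ μ₁ μ₂
      = sSup { e : EReal | ∃ φ ∈ lamRSet C F₁ F₂,
          e = (((∫ x, φ.1 x ∂μ₁) + ∫ x, φ.2 x ∂μ₂ : ℝ) : EReal) } :=
  stmt13_general C hClsc hCbdd hCconv F₁ F₂ hF₁ hF₂ μ₁ μ₂
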